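/- arXiv:1310.6056 — 2 statements merged into one kernel-verified Lean document; each statement's English description precedes it below -/
import Mathlib

section
/- Let n be an even positive integer, A an n×n positive-definite symmetric integer matrix with even diagonal entries, D = (−1)^{n/2} det(A), N the level of A (the smallest positive integer with N·A^{−1} an even integer matrix), P a spherical function of degree ν with respect to A, and h ∈ ℤⁿ a column vector with Ah ≡ 0 (mod N). Define θ(τ; h, A, N, P) = ∑_{x ∈ ℤⁿ, x ≡ h (mod N)} P(x) e^{2πi (ᵗx A x) τ / (2N²)} for τ in the upper half-plane. Then for every γ = (a b; c d) ∈ Γ₀(N) one has θ(γτ; h, A, N, P) = (D/d) · e^{2πi a b (ᵗh A h) / (2N²)} · (cτ + d)^{n/2 + ν} · θ(τ; a·h, A, N, P). -/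
open Matrix UpperHalfPlane Complex CongruenceSubgroup
open scoped MatrixGroups

/-- The factor of the Kronecker symbol `(a/b)` at the prime `2`. -/
def kronTwo (a : ℤ) : ℤ :=
  if 2 ∣ a then 0 else if a % 8 = 1 ∨ a % 8 = 7 then 1 else -1

/-- The Kronecker symbol `(a/b)`: completely multiplicative in `b`, with
`(a / 0) = 1` iff `a = ±1`, a sign factor at `-1`, `kronTwo` at `2`, and the Jacobi
(= product of Legendre) symbol on the odd part of `b`. -/
noncomputable def kronecker (a b : ℤ) : ℤ :=
  if b = 0 then (if a = 1 ∨ a = -1 then 1 else 0)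
  else
    (if b < 0 ∧ a < 0 then -1 else 1) *
      kronTwo a ^ padicValNat 2 b.natAbs *
      jacobiSym a (b.natAbs / 2 ^ padicValNat 2 b.natAbs)

/-- The linear form `x ↦ ᵗl A x`. -/
noncomputable def sphericalLin {n : ℕ} (A : Matrix (Fin n) (Fin n) ℤ) (l : Fin n → ℂ)
    (x : Fin n → ℤ) : ℂ :=
  ∑ i, ∑ j, l i * (A i j : ℂ) * (x j : ℂ)

/-- A spherical function of degree `ν` with respect to `A`: a constant if `ν = 0`;
`x ↦ ᵗl A x` with `l ∈ ℂⁿ` if `ν = 1`; a finite linear combination of `x ↦ (ᵗl A x)^ν`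
with `ᵗl A l = 0` if `ν > 1`. -/
def IsSpherical {n : ℕ} (A : Matrix (Fin n) (Fin n) ℤ) (ν : ℕ) (P : (Fin n → ℤ) → ℂ) : Prop :=
  (ν = 0 ∧ ∃ c : ℂ, P = fun _ => c) ∨
  (ν = 1 ∧ ∃ l : Fin n → ℂ, P = fun x => sphericalLin A l x) ∨
  (1 < ν ∧ ∃ (k : ℕ) (c : Fin k → ℂ) (l : Fin k → Fin n → ℂ),
      (∀ t, ∑ i, ∑ j, l t i * (A i j : ℂ) * l t j = 0) ∧
      P = fun x => ∑ t, c t * sphericalLin A (l t) x ^ ν)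

/-!
Write `Q` for the quadratic form of `A` and let `γ = (a b; c d)` with `d > 0`. Splitting the sum
over a coset of `ℤ^ι` into residue classes modulo `d` and applying Poisson summation to the
Gaussians `v ↦ exp (πiτ Q[v] + l·v)` gives the transformation law for theta series with a linear
term, whose multiplier is a quadratic Gauss sum modulo `d` divided by `d^(n/2)`. Comparing Taylor
coefficients in `l`, restricted to a line, introduces the powers `(l·v)^ν`: the extra factor
`exp (q s²)` is trivial if `l` is isotropic and does not affect coefficients of degree at most one.

If `d` is an odd prime not dividing `D`, diagonalizing `A` over `𝔽_d` evaluates the Gauss sum as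
`(D/d) d^(n/2)`. The laws compose, and elements with `d = 1` have multiplier `1`; multiplying `γ`
by shears `(1 0; Nx 1) (1 y; 0 1)` therefore changes `d` without changing the multiplier, and
Dirichlet's theorem moves any odd `d` to a prime congruent to it modulo `4 D`. If `d` is even, then
`N` is odd, which forces `D ≡ 1` modulo `4`; the Kronecker symbol is then periodic modulo `D`, and
a shear replaces `d` by an odd number in its residue class.
-/

open MeasureTheory
open scoped Real

section Poisson

variable {ι : Type*}

/-- The projection of `ℝ^ι` onto the torus `(ℝ/ℤ)^ι`. -/
def toTorus : C(ι → ℝ, UnitAddTorus ι) :=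
  ⟨Pi.map fun _ => ((↑) : ℝ → UnitAddCircle),
    .piMap fun _ => AddCircle.continuous_mk' 1⟩

lemma toTorus_add_intCast (x : ι → ℝ) (m : ι → ℤ) : toTorus (x + Int.cast ∘ m) = toTorus x := by
  funext i
  simp [toTorus]

lemma exists_eq_add_intCast_of_toTorus_eq {x y : ι → ℝ} (hxy : toTorus x = toTorus y) :
    ∃ m : ι → ℤ, x = y + Int.cast ∘ m := by
  have (i : ι) : ∃ k : ℤ, x i = y i + k := by
    have : ((x i - y i : ℝ) : UnitAddCircle) = 0 := by
      rw [AddCircle.coe_sub, sub_eq_zero]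
      exact congrFun hxy i
    obtain ⟨k, hk⟩ := (AddCircle.coe_eq_zero_iff 1).mp this
    exact ⟨k, by linarith [(zsmul_one (R := ℝ) k).symm.trans hk]⟩
  choose m hm using this
  exact ⟨m, funext hm⟩

lemma isQuotientMap_toTorus : Topology.IsQuotientMap (toTorus : C(ι → ℝ, UnitAddTorus ι)) :=
  (IsOpenQuotientMap.piMap fun _ => QuotientAddGroup.isOpenQuotientMap_mk).isQuotientMap

/-- The half-open unit cube `(0, 1]^ι`, in the form in which it carries the measure of the torus. -/
def unitCube (ι : Type*) : Set (ι → ℝ) :=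
  {x | ∀ i, x i ∈ Set.Ioc (0 : ℝ) (0 + 1)}

lemma sub_intCast_mem_unitCube_iff {x : ι → ℝ} {m : ι → ℤ} :
    x - Int.cast ∘ m ∈ unitCube ι ↔ m = fun i => ⌈x i⌉ - 1 := by
  rw [funext_iff]
  refine forall_congr' fun i => ?_
  rw [eq_sub_iff_add_eq, eq_comm, Int.ceil_eq_iff]
  simp only [Pi.sub_apply, Function.comp_apply, Set.mem_Ioc]
  push_cast
  constructor <;> rintro ⟨h₁, h₂⟩ <;> constructor <;> linarith

/-- The `ℤ^ι`-periodization `x ↦ ∑ₘ f (x + m)` of a function on `ℝ^ι`. -/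
noncomputable def periodization (f : (ι → ℝ) → ℂ) (x : ι → ℝ) : ℂ :=
  ∑' m : ι → ℤ, f (x + Int.cast ∘ m)

lemma periodization_add_intCast (f : (ι → ℝ) → ℂ) (x : ι → ℝ) (k : ι → ℤ) :
    periodization f (x + Int.cast ∘ k) = periodization f x := by
  unfold periodization
  rw [← (Equiv.addLeft k).tsum_eq fun m => f (x + Int.cast ∘ m)]
  refine tsum_congr fun m => congrArg f (funext fun i => ?_)
  simp [add_assoc]

variable [Fintype ι] {f : (ι → ℝ) → ℂ}

/-- Exponential decay of a function on `ℝ^ι`, measured by the `ℓ¹` norm. It is the regularity under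
which Poisson summation is proved. -/
def HasExpDecay (f : (ι → ℝ) → ℂ) : Prop :=
  ∃ C : ℝ, ∀ v, ‖f v‖ ≤ C * Real.exp (-∑ i, |v i|)

lemma mFourier_toTorus (y : ι → ℤ) (x : ι → ℝ) :
    UnitAddTorus.mFourier y (toTorus x) = cexp (2 * π * Complex.I * ∑ i, y i * x i) := by
  simp only [UnitAddTorus.mFourier, toTorus, ContinuousMap.coe_mk, Pi.map_apply,
    fourier_coe_apply, Complex.ofReal_sum, Finset.mul_sum, Complex.exp_sum]
  refine Finset.prod_congr rfl fun i _ => ?_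
  congr 1
  push_cast
  ring

lemma norm_mFourier_apply (y : ι → ℤ) (t : UnitAddTorus ι) : ‖UnitAddTorus.mFourier y t‖ = 1 := by
  simp only [UnitAddTorus.mFourier, ContinuousMap.coe_mk, norm_prod, fourier_apply,
    Circle.norm_coe, Finset.prod_const_one]

lemma summable_exp_neg_abs_int : Summable fun m : ℤ => Real.exp (-|(m : ℝ)|) :=
  .of_nat_of_neg (by simpa using Real.summable_exp_neg_nat)
    (by simpa using Real.summable_exp_neg_nat)

lemma integrable_exp_neg_abs : Integrable fun x : ℝ => Real.exp (-|x|) := by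
  rw [← integrableOn_univ, ← Set.Iic_union_Ioi (a := (0 : ℝ))]
  refine .union ((integrableOn_exp_Iic 0).congr_fun (fun x hx => ?_) measurableSet_Iic)
    ((integrableOn_exp_neg_Ioi 0).congr_fun (fun x hx => ?_) measurableSet_Ioi)
  · simp [abs_of_nonpos (Set.mem_Iic.mp hx)]
  · simp [abs_of_pos (Set.mem_Ioi.mp hx)]

lemma summable_exp_neg_sum_abs_fin (n : ℕ) :
    Summable fun m : Fin n → ℤ => Real.exp (-∑ i, |(m i : ℝ)|) := by
  induction n with
  | zero => exact .of_finite
  | succ n ih =>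
    rw [← (Fin.consEquiv fun _ : Fin (n + 1) => ℤ).summable_iff]
    refine (summable_exp_neg_abs_int.mul_of_nonneg ih (fun _ => (Real.exp_pos _).le)
      (fun _ => (Real.exp_pos _).le)).congr fun p => ?_
    simp [Fin.consEquiv, Fin.sum_univ_succ, Real.exp_add, add_comm]

lemma summable_exp_neg_sum_abs : Summable fun m : ι → ℤ => Real.exp (-∑ i, |(m i : ℝ)|) := by
  let e := Fintype.equivFin ι
  rw [← (e.symm.arrowCongr (Equiv.refl ℤ)).summable_iff]
  refine (summable_exp_neg_sum_abs_fin (Fintype.card ι)).congr fun m => ?_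
  rw [← e.sum_comp]
  simp

lemma integrable_exp_neg_sum_abs : Integrable fun v : ι → ℝ => Real.exp (-∑ i, |v i|) := by
  simp_rw [← Finset.sum_neg_distrib, Real.exp_sum]
  exact .fintype_prod (f := fun _ x => Real.exp (-|x|)) fun _ => integrable_exp_neg_abs

lemma hasSum_integral_unitCube {E : Type*} [NormedAddCommGroup E] [NormedSpace ℝ E]
    {g : (ι → ℝ) → E} (hg : Integrable g) :
    HasSum (fun m : ι → ℤ => ∫ x in unitCube ι, g (x + Int.cast ∘ m)) (∫ x, g x) := by
  let s (m : ι → ℤ) : Set (ι → ℝ) := (fun x => x - Int.cast ∘ m) ⁻¹' unitCube ι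
  have hs (m : ι → ℤ) : MeasurableSet (s m) :=
    (measurable_sub_const _) (MeasurableSet.univ_pi' fun _ => measurableSet_Ioc)
  have hdisj : Pairwise (Function.onFun Disjoint s) := fun m m' hne =>
    Set.disjoint_left.mpr fun x hx hx' => hne <|
      (sub_intCast_mem_unitCube_iff.mp hx).trans (sub_intCast_mem_unitCube_iff.mp hx').symm
  have hcover : ⋃ m, s m = Set.univ := Set.eq_univ_of_forall fun x =>
    Set.mem_iUnion.mpr ⟨_, sub_intCast_mem_unitCube_iff.mpr rfl⟩
  have hsum := hasSum_integral_iUnion hs hdisj (f := g) (μ := volume) hg.integrableOn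
  rw [hcover, setIntegral_univ] at hsum
  refine hsum.congr_fun fun m => ?_
  rw [← (measurePreserving_sub_right volume (Int.cast ∘ m : ι → ℝ)).setIntegral_preimage_emb
    (Homeomorph.subRight _).measurableEmbedding (fun x => g (x + Int.cast ∘ m)) (unitCube ι)]
  exact setIntegral_congr_fun (hs m) fun x _ => by simp

lemma HasExpDecay.exists_norm_add_intCast_le (hf : HasExpDecay f) :
    ∃ C : ℝ, 0 ≤ C ∧ ∀ (x : ι → ℝ) (m : ι → ℤ), ‖f (x + Int.cast ∘ m)‖ ≤
      C * Real.exp (∑ i, |x i|) * Real.exp (-∑ i, |(m i : ℝ)|) := by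
  obtain ⟨C, hC⟩ := hf
  have hC₀ : 0 ≤ C := by simpa using (norm_nonneg _).trans (hC 0)
  refine ⟨C, hC₀, fun x m => (hC _).trans ?_⟩
  rw [mul_assoc, ← Real.exp_add]
  gcongr
  rw [← sub_eq_add_neg, neg_le_sub_iff_le_add, ← Finset.sum_add_distrib]
  refine Finset.sum_le_sum fun i _ => ?_
  calc |(m i : ℝ)| = |(x i + m i) - x i| := by ring_nf
    _ ≤ |x i| + |x i + m i| := by rw [add_comm |x i|]; exact abs_sub _ _

lemma HasExpDecay.summable_add_intCast (hf : HasExpDecay f) (x : ι → ℝ) :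
    Summable fun m : ι → ℤ => f (x + Int.cast ∘ m) := by
  obtain ⟨C, -, hC⟩ := hf.exists_norm_add_intCast_le
  exact .of_norm_bounded (summable_exp_neg_sum_abs.mul_left _) (hC x)

lemma HasExpDecay.integrable (hf : HasExpDecay f) (hc : Continuous f) : Integrable f := by
  obtain ⟨C, hC⟩ := hf
  exact (integrable_exp_neg_sum_abs.const_mul C).mono' hc.aestronglyMeasurable (.of_forall hC)

lemma continuous_periodization (hc : Continuous f) (hf : HasExpDecay f) :
    Continuous (periodization f) := by
  obtain ⟨C, hC₀, hC⟩ := hf.exists_norm_add_intCast_le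
  refine continuous_iff_continuousAt.mpr fun x₀ => ?_
  let U : Set (ι → ℝ) := {x | ∑ i, |x i| < ∑ i, |x₀ i| + 1}
  have hU : IsOpen U := isOpen_lt (by fun_prop) continuous_const
  refine ContinuousOn.continuousAt ?_ (hU.mem_nhds (by simp [U]))
  refine continuousOn_tsum (fun m => by fun_prop) (summable_exp_neg_sum_abs.mul_left
    (C * Real.exp (∑ i, |x₀ i| + 1))) fun m x hx => (hC x m).trans ?_
  gcongr
  exact le_of_lt hx

lemma setIntegral_unitCube_periodization (hf : Integrable f) :
    ∫ x in unitCube ι, periodization f x = ∫ x, f x :=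
  calc ∫ x in unitCube ι, periodization f x
      = ∑' m : ι → ℤ, ∫ x in unitCube ι, f (x + Int.cast ∘ m) :=
        (integral_tsum_of_summable_integral_norm
          (fun m => (hf.comp_add_right (Int.cast ∘ m : ι → ℝ)).integrableOn)
          (hasSum_integral_unitCube hf.norm).summable).symm
    _ = ∫ x, f x := (hasSum_integral_unitCube hf).tsum_eq

lemma mFourierCoeff_of_comp_toTorus_eq (hf : Integrable f) {F : C(UnitAddTorus ι, ℂ)}
    (hF : ∀ x, F (toTorus x) = periodization f x) (y : ι → ℤ) :
    UnitAddTorus.mFourierCoeff F y = ∫ v, UnitAddTorus.mFourier (-y) (toTorus v) * f v := by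
  have hprod : Integrable fun v => UnitAddTorus.mFourier (-y) (toTorus v) * f v :=
    hf.bdd_mul (c := 1) (Continuous.aestronglyMeasurable
      ((map_continuous _).comp isQuotientMap_toTorus.continuous))
      (.of_forall fun v => (norm_mFourier_apply _ _).le)
  rw [UnitAddTorus.mFourierCoeff_eq_integral _ y 0, ← setIntegral_unitCube_periodization hprod]
  refine integral_congr_ae (.of_forall fun x => ?_)
  change UnitAddTorus.mFourier (-y) (toTorus x) • F (toTorus x) = _
  simp only [hF, periodization, toTorus_add_intCast, tsum_mul_left, smul_eq_mul]

theorem periodization_eq_tsum_fourier (hc : Continuous f) (hf : HasExpDecay f)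
    (hs : Summable fun y : ι → ℤ => ∫ v, UnitAddTorus.mFourier (-y) (toTorus v) * f v)
    (x : ι → ℝ) :
    periodization f x = ∑' y : ι → ℤ,
      (∫ v, UnitAddTorus.mFourier (-y) (toTorus v) * f v) *
        UnitAddTorus.mFourier y (toTorus x) := by
  have hfactors : Function.FactorsThrough (periodization f) toTorus := fun x y hxy => by
    obtain ⟨m, rfl⟩ := exists_eq_add_intCast_of_toTorus_eq hxy
    exact periodization_add_intCast f y m
  let F : C(UnitAddTorus ι, ℂ) :=
    isQuotientMap_toTorus.lift ⟨periodization f, continuous_periodization hc hf⟩ hfactors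
  have hF (v : ι → ℝ) : F (toTorus v) = periodization f v :=
    DFunLike.congr_fun (isQuotientMap_toTorus.lift_comp
      ⟨periodization f, continuous_periodization hc hf⟩ hfactors) v
  have hcoeff := mFourierCoeff_of_comp_toTorus_eq (hf.integrable hc) hF
  have hsum := UnitAddTorus.hasSum_mFourier_series_apply_of_summable (f := F)
    (by simpa only [funext hcoeff] using hs) (toTorus x)
  simpa only [hF, hcoeff, smul_eq_mul] using hsum.tsum_eq.symm

end Poisson

section SymmetricForm

variable {ι R : Type*} [Fintype ι] [CommRing R] {S : Matrix ι ι R}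

lemma dotProduct_mulVec_comm_of_isSymm (hS : S.IsSymm) (v w : ι → R) :
    v ⬝ᵥ S *ᵥ w = w ⬝ᵥ S *ᵥ v := by
  rw [dotProduct_mulVec, dotProduct_comm, ← mulVec_transpose, hS]

lemma dotProduct_mulVec_add_self (hS : S.IsSymm) (v w : ι → R) :
    (v + w) ⬝ᵥ S *ᵥ (v + w) = v ⬝ᵥ S *ᵥ v + 2 * (v ⬝ᵥ S *ᵥ w) + w ⬝ᵥ S *ᵥ w := by
  rw [mulVec_add, dotProduct_add, add_dotProduct, add_dotProduct,
    dotProduct_mulVec_comm_of_isSymm hS w v]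
  ring

lemma dotProduct_mulVec_smul_self (S : Matrix ι ι R) (c : R) (v : ι → R) :
    (c • v) ⬝ᵥ S *ᵥ (c • v) = c ^ 2 * (v ⬝ᵥ S *ᵥ v) := by
  rw [mulVec_smul, dotProduct_smul, smul_dotProduct, smul_eq_mul, smul_eq_mul]
  ring

lemma map_dotProduct_mulVec {R' : Type*} [CommRing R'] (f : R →+* R') (S : Matrix ι ι R)
    (v w : ι → R) : f (v ⬝ᵥ S *ᵥ w) = (f ∘ v) ⬝ᵥ (S.map f) *ᵥ (f ∘ w) := by
  simp [dotProduct, mulVec]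

end SymmetricForm

section PosDef

variable {ι : Type*}

lemma isSymm_of_posDef {Q : Matrix ι ι ℝ} (hQ : Q.PosDef) : Q.IsSymm := by
  rw [Matrix.IsSymm, ← conjTranspose_eq_transpose_of_trivial]
  exact hQ.isHermitian

variable [Fintype ι]

lemma dotProduct_transpose_mul_self_mulVec (M : Matrix ι ι ℝ) (v : ι → ℝ) :
    v ⬝ᵥ (Mᵀ * M) *ᵥ v = ∑ i, (M *ᵥ v) i ^ 2 := by
  rw [← mulVec_mulVec, dotProduct_mulVec, vecMul_transpose]
  simp [dotProduct, sq]

variable {Q : Matrix ι ι ℝ}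

open scoped MatrixOrder in
lemma exists_eq_transpose_mul_self_of_posDef [DecidableEq ι] (hQ : Q.PosDef) :
    ∃ M : Matrix ι ι ℝ, IsUnit M.det ∧ Q = Mᵀ * M := by
  obtain ⟨M, hM⟩ := CStarAlgebra.nonneg_iff_eq_star_mul_self.mp hQ.posSemidef.nonneg
  rw [star_eq_conjTranspose, conjTranspose_eq_transpose_of_trivial] at hM
  have hdet := hQ.det_pos.ne'
  rw [hM, det_mul] at hdet
  exact ⟨M, (right_ne_zero_of_mul hdet).isUnit, hM⟩

lemma exists_pos_mul_sum_sq_le (hQ : Q.PosDef) :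
    ∃ δ : ℝ, 0 < δ ∧ ∀ v : ι → ℝ, δ * ∑ i, v i ^ 2 ≤ v ⬝ᵥ Q *ᵥ v := by
  classical
  obtain ⟨M, hM, rfl⟩ := exists_eq_transpose_mul_self_of_posDef hQ
  let K : ℝ := ∑ i, ∑ j, M⁻¹ i j ^ 2
  have : 0 ≤ K := by positivity
  refine ⟨(K + 1)⁻¹, by positivity, fun v => ?_⟩
  have hv : v = M⁻¹ *ᵥ (M *ᵥ v) := by rw [mulVec_mulVec, nonsing_inv_mul _ hM, one_mulVec]
  rw [dotProduct_transpose_mul_self_mulVec, inv_mul_le_iff₀ (by positivity)]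
  calc ∑ i, v i ^ 2 = ∑ i, (∑ j, M⁻¹ i j * (M *ᵥ v) j) ^ 2 := by
        conv_lhs => rw [hv]
        rfl
    _ ≤ ∑ i, (∑ j, M⁻¹ i j ^ 2) * ∑ j, (M *ᵥ v) j ^ 2 :=
        Finset.sum_le_sum fun i _ => Finset.sum_mul_sq_le_sq_mul_sq _ _ _
    _ = K * ∑ j, (M *ᵥ v) j ^ 2 := by rw [← Finset.sum_mul]
    _ ≤ (K + 1) * ∑ j, (M *ᵥ v) j ^ 2 := by gcongr; linarith

lemma integral_comp_mulVec [DecidableEq ι] {E : Type*} [NormedAddCommGroup E] [NormedSpace ℝ E]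
    {W : Matrix ι ι ℝ} (hW : W.det ≠ 0) (f : (ι → ℝ) → E) :
    ∫ u, f (W *ᵥ u) = |W.det|⁻¹ • ∫ v, f v := by
  have hinj : Function.Injective (toLin' W) :=
    mulVec_injective_iff_isUnit.mpr ((isUnit_iff_isUnit_det W).mpr hW.isUnit)
  have hmap := (LinearMap.isClosedEmbedding_of_injective
    (LinearMap.ker_eq_bot.mpr hinj)).measurableEmbedding.integral_map (μ := volume) f
  rw [Real.map_matrix_volume_pi_eq_smul_volume_pi hW, integral_smul_measure,
    ENNReal.toReal_ofReal (abs_nonneg _), abs_inv] at hmap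
  exact hmap.symm

end PosDef

section Gaussian

variable {ι : Type*} [Fintype ι] {Q : Matrix ι ι ℝ} {τ : ℂ}

/-- The Gaussian `v ↦ exp (πiτ Q[v] + l·v)` on `ℝ^ι`. The linear term is the parameter of the
generating function of the spherical theta series, and also carries the characters that appear in
Poisson summation. -/
noncomputable def gaussian (Q : Matrix ι ι ℝ) (τ : ℂ) (l : ι → ℂ) (v : ι → ℝ) : ℂ :=
  cexp (π * Complex.I * τ * (v ⬝ᵥ Q *ᵥ v : ℝ) + l ⬝ᵥ (ofReal ∘ v))

lemma continuous_gaussian (Q : Matrix ι ι ℝ) (τ : ℂ) (l : ι → ℂ) :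
    Continuous (gaussian Q τ l) := by
  unfold gaussian
  simp only [dotProduct, Function.comp_apply]
  fun_prop

lemma norm_dotProduct_ofReal_le (l : ι → ℂ) (v : ι → ℝ) :
    ‖l ⬝ᵥ (ofReal ∘ v)‖ ≤ (∑ i, ‖l i‖) * ∑ i, |v i| := by
  refine (norm_sum_le _ _).trans ?_
  rw [Finset.mul_sum]
  refine Finset.sum_le_sum fun i _ => ?_
  rw [norm_mul, Function.comp_apply, Complex.norm_real, Real.norm_eq_abs]
  gcongr
  exact Finset.single_le_sum (f := fun i => ‖l i‖) (fun _ _ => norm_nonneg _) (Finset.mem_univ i)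

lemma norm_gaussian_le (Q : Matrix ι ι ℝ) (τ : ℂ) (l : ι → ℂ) (v : ι → ℝ) :
    ‖gaussian Q τ l v‖ ≤
      Real.exp (-(π * τ.im) * (v ⬝ᵥ Q *ᵥ v) + (∑ i, ‖l i‖) * ∑ i, |v i|) := by
  rw [gaussian, Complex.norm_exp, Real.exp_le_exp, Complex.add_re]
  refine add_le_add (le_of_eq ?_) ((Complex.re_le_norm _).trans (norm_dotProduct_ofReal_le l v))
  simp [Complex.mul_re]

lemma exists_exp_neg_mul_add_le (hQ : Q.PosDef) {a : ℝ} (ha : 0 < a) (K : ℝ) :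
    ∃ C : ℝ, ∀ v : ι → ℝ,
      Real.exp (-a * (v ⬝ᵥ Q *ᵥ v) + K * ∑ i, |v i|) ≤ C * Real.exp (-∑ i, |v i|) := by
  obtain ⟨δ, hδ, hle⟩ := exists_pos_mul_sum_sq_le hQ
  refine ⟨Real.exp (∑ _i : ι, (K + 1) ^ 2 / (4 * (a * δ))), fun v => ?_⟩
  have hcoord (i : ι) : (K + 1) * |v i| ≤ (K + 1) ^ 2 / (4 * (a * δ)) + a * δ * v i ^ 2 := by
    have hsq : (K + 1) ^ 2 / (4 * (a * δ)) + a * δ * v i ^ 2 - (K + 1) * |v i| =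
        a * δ * (|v i| - (K + 1) / (2 * (a * δ))) ^ 2 := by
      rw [← sq_abs (v i)]
      field_simp
      ring
    have : 0 ≤ a * δ * (|v i| - (K + 1) / (2 * (a * δ))) ^ 2 := by positivity
    linarith
  have hsum := Finset.sum_le_sum fun i (_ : i ∈ Finset.univ) => hcoord i
  rw [Finset.sum_add_distrib, ← Finset.mul_sum, ← Finset.mul_sum] at hsum
  rw [← Real.exp_add, Real.exp_le_exp]
  nlinarith [mul_le_mul_of_nonneg_left (hle v) ha.le]

lemma hasExpDecay_gaussian (hQ : Q.PosDef) (hτ : 0 < τ.im) (l : ι → ℂ) :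
    HasExpDecay (gaussian Q τ l) := by
  obtain ⟨C, hC⟩ := exists_exp_neg_mul_add_le hQ (mul_pos Real.pi_pos hτ) (∑ i, ‖l i‖)
  exact ⟨C, fun v => (norm_gaussian_le Q τ l v).trans (hC v)⟩

variable [DecidableEq ι]

lemma gaussian_transpose_mul_self_inv_mulVec {M : Matrix ι ι ℝ} (hM : IsUnit M.det) (τ : ℂ)
    (l : ι → ℂ) (u : ι → ℝ) :
    gaussian (Mᵀ * M) τ l (M⁻¹ *ᵥ u) =
      cexp (-(-(π * Complex.I * τ)) * ∑ i, (u i : ℂ) ^ 2 +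
        ∑ i, (l ᵥ* M⁻¹.map ofReal) i * u i) := by
  have hlin : ofReal ∘ (M⁻¹ *ᵥ u) = M⁻¹.map ofReal *ᵥ (ofReal ∘ u) :=
    funext (RingHom.map_mulVec ofRealHom M⁻¹ u)
  rw [gaussian, dotProduct_transpose_mul_self_mulVec, mulVec_mulVec, mul_nonsing_inv _ hM,
    one_mulVec, hlin, dotProduct_mulVec, neg_neg]
  push_cast
  rfl

lemma sum_vecMul_inv_sq {M : Matrix ι ι ℝ} (l : ι → ℂ) :
    ∑ i, (l ᵥ* M⁻¹.map ofReal) i ^ 2 = l ⬝ᵥ ((Mᵀ * M)⁻¹.map ofReal) *ᵥ l := by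
  have hmap : ((Mᵀ * M)⁻¹).map ofReal = M⁻¹.map ofReal * (M⁻¹.map ofReal)ᵀ := by
    rw [Matrix.mul_inv_rev, ← transpose_nonsing_inv]
    exact Matrix.map_mul (f := ofRealHom)
  rw [hmap, ← mulVec_mulVec, mulVec_transpose, dotProduct_mulVec]
  simp only [dotProduct, sq]

theorem integral_gaussian_of_posDef (hQ : Q.PosDef) {k : ℕ} (hk : Fintype.card ι = 2 * k)
    (hτ : 0 < τ.im) (l : ι → ℂ) :
    ∫ v, gaussian Q τ l v = (√Q.det : ℂ)⁻¹ * (Complex.I / τ) ^ k *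
      cexp (Complex.I / (4 * π * τ) * (l ⬝ᵥ (Q⁻¹.map ofReal) *ᵥ l)) := by
  obtain ⟨M, hM, rfl⟩ := exists_eq_transpose_mul_self_of_posDef hQ
  have hτ₀ : τ ≠ 0 := by rintro rfl; simp at hτ
  have hπ : (π : ℂ) ≠ 0 := ofReal_ne_zero.mpr Real.pi_ne_zero
  have hdet : (√(Mᵀ * M).det : ℝ) = |M⁻¹.det|⁻¹ := by
    rw [det_mul, det_transpose, Real.sqrt_mul_self_eq_abs, det_nonsing_inv,
      Ring.inverse_eq_inv', abs_inv, inv_inv]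
  have hW : M⁻¹.det ≠ 0 := (isUnit_nonsing_inv_det _ hM).ne_zero
  have hsubst := integral_comp_mulVec hW (gaussian (Mᵀ * M) τ l)
  simp_rw [gaussian_transpose_mul_self_inv_mulVec hM] at hsubst
  rw [GaussianFourier.integral_cexp_neg_mul_sum_add (by simpa using mul_pos Real.pi_pos hτ),
    sum_vecMul_inv_sq, eq_comm, inv_smul_eq_iff₀ (abs_ne_zero.mpr hW), real_smul] at hsubst
  have hbase : π / -(π * Complex.I * τ) = Complex.I / τ := by
    field_simp
    simp
  have hexp (z : ℂ) : z / (4 * -(π * Complex.I * τ)) = Complex.I / (4 * π * τ) * z := by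
    field_simp
    simp
  have hcard : ((2 * k : ℕ) : ℂ) / 2 = (k : ℕ) := by push_cast; ring
  rw [hsubst, hdet, ofReal_inv, inv_inv, hk, hcard, Complex.cpow_natCast, hbase, hexp, ← mul_assoc]

end Gaussian

section Inversion

variable {ι : Type*} [Fintype ι]

lemma mFourier_mul_gaussian (Q : Matrix ι ι ℝ) (τ : ℂ) (l : ι → ℂ) (y : ι → ℤ) (v : ι → ℝ) :
    UnitAddTorus.mFourier (-y) (toTorus v) * gaussian Q τ l v =
      gaussian Q τ (l + (-(2 * π * Complex.I)) • (Int.cast ∘ y)) v := by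
  have hpair : ((∑ i, (-y) i * v i : ℝ) : ℂ) = -((Int.cast ∘ y) ⬝ᵥ (ofReal ∘ v)) := by
    simp [dotProduct]
  rw [mFourier_toTorus, hpair, gaussian, gaussian, ← Complex.exp_add, add_dotProduct,
    smul_dotProduct, smul_eq_mul]
  congr 1
  ring

variable [DecidableEq ι] {Q : Matrix ι ι ℝ} {τ : ℂ}

lemma im_neg_inv_pos (hτ : 0 < τ.im) : 0 < (-τ⁻¹).im := by
  rw [← inv_neg]
  exact UpperHalfPlane.im_inv_neg_coe_pos ⟨τ, hτ⟩

lemma integral_mFourier_mul_gaussian (hQ : Q.PosDef) {k : ℕ} (hk : Fintype.card ι = 2 * k)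
    (hτ : 0 < τ.im) (l : ι → ℂ) (x : ι → ℝ) (y : ι → ℤ) :
    (∫ v, UnitAddTorus.mFourier (-y) (toTorus v) * gaussian Q τ l v) *
        UnitAddTorus.mFourier y (toTorus x) =
      (√Q.det : ℂ)⁻¹ * (Complex.I / τ) ^ k *
          cexp (Complex.I / (4 * π * τ) * (l ⬝ᵥ (Q⁻¹.map ofReal) *ᵥ l)) *
        gaussian Q⁻¹ (-τ⁻¹) (τ⁻¹ • (Q⁻¹.map ofReal *ᵥ l) + (2 * π * Complex.I) • (ofReal ∘ x))
          (Int.cast ∘ y) := by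
  have hsymm : (Q⁻¹.map ofReal).IsSymm := (isSymm_of_posDef hQ.inv).map _
  have hτ₀ : τ ≠ 0 := by rintro rfl; simp at hτ
  have hcast : ofReal ∘ (Int.cast ∘ y : ι → ℝ) = (Int.cast ∘ y : ι → ℂ) := by
    funext i
    simp
  have hpair : ((∑ i, y i * x i : ℝ) : ℂ) = (ofReal ∘ x) ⬝ᵥ (Int.cast ∘ y : ι → ℂ) := by
    simp [dotProduct, mul_comm]
  have hform : (((Int.cast ∘ y) ⬝ᵥ Q⁻¹ *ᵥ (Int.cast ∘ y) : ℝ) : ℂ) =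
      (Int.cast ∘ y) ⬝ᵥ Q⁻¹.map ofReal *ᵥ (Int.cast ∘ y) := by
    rw [← hcast]
    exact map_dotProduct_mulVec ofRealHom _ _ _
  simp_rw [mFourier_mul_gaussian]
  rw [integral_gaussian_of_posDef hQ hk hτ, mul_assoc, mul_assoc (_ * _), mFourier_toTorus,
    gaussian, ← Complex.exp_add, ← Complex.exp_add, dotProduct_mulVec_add_self hsymm,
    dotProduct_mulVec_smul_self, mulVec_smul, dotProduct_smul, smul_eq_mul, hpair, hform, hcast,
    add_dotProduct, smul_dotProduct, smul_dotProduct, smul_eq_mul, smul_eq_mul,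
    dotProduct_comm (Q⁻¹.map ofReal *ᵥ l),
    dotProduct_mulVec_comm_of_isSymm hsymm (Int.cast ∘ y) l]
  congr 2
  have hπ : (π : ℂ) ≠ 0 := ofReal_ne_zero.mpr Real.pi_ne_zero
  field_simp
  ring_nf
  simp only [Complex.I_sq, Complex.I_pow_three]
  ring

theorem periodization_gaussian (hQ : Q.PosDef) {k : ℕ} (hk : Fintype.card ι = 2 * k)
    (hτ : 0 < τ.im) (l : ι → ℂ) (x : ι → ℝ) :
    periodization (gaussian Q τ l) x =
      (√Q.det : ℂ)⁻¹ * (Complex.I / τ) ^ k *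
          cexp (Complex.I / (4 * π * τ) * (l ⬝ᵥ (Q⁻¹.map ofReal) *ᵥ l)) *
        ∑' y : ι → ℤ, gaussian Q⁻¹ (-τ⁻¹)
          (τ⁻¹ • (Q⁻¹.map ofReal *ᵥ l) + (2 * π * Complex.I) • (ofReal ∘ x)) (Int.cast ∘ y) := by
  have hs : Summable fun y : ι → ℤ =>
      ∫ v, UnitAddTorus.mFourier (-y) (toTorus v) * gaussian Q τ l v := by
    have hzero (y : ι → ℤ) : UnitAddTorus.mFourier y (toTorus (0 : ι → ℝ)) = 1 := by
      simp [mFourier_toTorus]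
    have hterm := integral_mFourier_mul_gaussian hQ hk hτ l 0
    simp only [hzero, mul_one] at hterm
    simp_rw [hterm]
    simpa only [zero_add] using ((hasExpDecay_gaussian hQ.inv (im_neg_inv_pos hτ)
      _).summable_add_intCast 0).mul_left _
  rw [periodization_eq_tsum_fourier (continuous_gaussian Q τ l) (hasExpDecay_gaussian hQ hτ l) hs]
  simp_rw [integral_mFourier_mul_gaussian hQ hk hτ, tsum_mul_left]

end Inversion

section EvenLattice

variable {ι : Type*}

/-- The Gram matrix `A` regarded as the matrix of a real quadratic form. -/
abbrev realForm (A : Matrix ι ι ℤ) : Matrix ι ι ℝ := A.map Int.cast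

variable [Fintype ι] {A : Matrix ι ι ℤ}

lemma realForm_mulVec_intCast (A : Matrix ι ι ℤ) (y : ι → ℤ) :
    realForm A *ᵥ (Int.cast ∘ y) = Int.cast ∘ (A *ᵥ y) :=
  funext fun i => (RingHom.map_mulVec (Int.castRingHom ℝ) A y i).symm

lemma dotProduct_intCast (y z : ι → ℤ) :
    (Int.cast ∘ y : ι → ℝ) ⬝ᵥ (Int.cast ∘ z) = (y ⬝ᵥ z : ℤ) :=
  (RingHom.map_dotProduct (Int.castRingHom ℝ) y z).symm

lemma even_dotProduct_mulVec_self (hsymm : A.IsSymm) (heven : ∀ i, 2 ∣ A i i) (y : ι → ℤ) :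
    Even (y ⬝ᵥ A *ᵥ y) := by
  suffices h : ((∑ i, ∑ j, y i * A i j * y j : ℤ) : ZMod 2) = 0 by
    rw [even_iff_two_dvd]
    simp only [dotProduct, mulVec, Finset.mul_sum, ← mul_assoc]
    exact (ZMod.intCast_zmod_eq_zero_iff_dvd _ 2).mp h
  rw [← Finset.sum_product']
  push_cast
  refine Finset.sum_involution (fun p _ => p.swap) ?_ ?_ ?_ ?_
  · rintro ⟨i, j⟩ -
    change (y i * A i j * y j + y j * A j i * y i : ZMod 2) = 0
    rw [hsymm.apply i j, mul_right_comm, mul_comm (y i : ZMod 2), ← mul_right_comm]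
    exact CharTwo.add_self_eq_zero _
  · rintro ⟨i, j⟩ - hne heq
    obtain rfl : j = i := congrArg Prod.fst heq
    refine hne ?_
    simp [(ZMod.intCast_zmod_eq_zero_iff_dvd (A j j) 2).mpr (heven j)]
  · simp
  · simp

lemma realForm_nonneg (hpos : ∀ x : ι → ℤ, x ≠ 0 → 0 < x ⬝ᵥ A *ᵥ x) (v : ι → ℝ) :
    0 ≤ v ⬝ᵥ realForm A *ᵥ v := by
  have hdense : DenseRange (Pi.map fun _ : ι => ((↑) : ℚ → ℝ)) :=
    DenseRange.piMap fun _ => Rat.denseRange_cast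
  refine hdense.induction_on (p := fun v => 0 ≤ v ⬝ᵥ realForm A *ᵥ v) v
    (isClosed_le continuous_const (by fun_prop)) fun p => ?_
  obtain ⟨b, hb⟩ := IsLocalization.exist_integer_multiples_of_finite (nonZeroDivisors ℤ) p
  choose z hz using hb
  have hb₀ : ((b : ℤ) : ℝ) ≠ 0 := by exact_mod_cast nonZeroDivisors.coe_ne_zero b
  have hzp : (Int.cast ∘ z : ι → ℝ) = ((b : ℤ) : ℝ) • Pi.map (fun _ : ι => ((↑) : ℚ → ℝ)) p := by
    funext i
    have := hz i
    simp only [eq_intCast, zsmul_eq_mul] at this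
    simp only [Function.comp_apply, Pi.smul_apply, Pi.map_apply, smul_eq_mul]
    exact_mod_cast congrArg (Rat.cast : ℚ → ℝ) this
  have hz₀ : 0 ≤ z ⬝ᵥ A *ᵥ z := by
    rcases eq_or_ne z 0 with rfl | h
    · simp
    · exact (hpos z h).le
  have hform : ((z ⬝ᵥ A *ᵥ z : ℤ) : ℝ) = (Int.cast ∘ z) ⬝ᵥ realForm A *ᵥ (Int.cast ∘ z) := by
    rw [realForm_mulVec_intCast, dotProduct_intCast]
  rw [hzp, dotProduct_mulVec_smul_self] at hform
  exact nonneg_of_mul_nonneg_right (hform ▸ Int.cast_nonneg hz₀) (by positivity)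

/-- Membership of a vector in the dual lattice of the lattice `ℤ^ι` with Gram matrix `A`. -/
def IsDualVector (A : Matrix ι ι ℤ) (x : ι → ℝ) : Prop :=
  ∃ u : ι → ℤ, realForm A *ᵥ x = Int.cast ∘ u

lemma isDualVector_zero (A : Matrix ι ι ℤ) : IsDualVector A 0 :=
  ⟨0, by rw [mulVec_zero]; funext; simp⟩

lemma IsDualVector.intCast_smul {x : ι → ℝ} (hx : IsDualVector A x) (a : ℤ) :
    IsDualVector A ((a : ℝ) • x) := by
  obtain ⟨u, hu⟩ := hx
  refine ⟨a • u, ?_⟩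
  rw [mulVec_smul, hu]
  funext i
  simp

lemma IsDualVector.exists_dotProduct_mulVec_eq {x : ι → ℝ} (hx : IsDualVector A x) (y : ι → ℤ) :
    ∃ m : ℤ, (Int.cast ∘ y) ⬝ᵥ realForm A *ᵥ x = m := by
  obtain ⟨u, hu⟩ := hx
  exact ⟨y ⬝ᵥ u, by rw [hu, dotProduct_intCast]⟩

lemma det_ne_zero_of_pos [DecidableEq ι] (hpos : ∀ x : ι → ℤ, x ≠ 0 → 0 < x ⬝ᵥ A *ᵥ x) :
    A.det ≠ 0 := fun h => by
  obtain ⟨v, hv, hAv⟩ := exists_mulVec_eq_zero_iff.mpr h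
  simpa [hAv] using hpos v hv

lemma posDef_realForm (hsymm : A.IsSymm) (hpos : ∀ x : ι → ℤ, x ≠ 0 → 0 < x ⬝ᵥ A *ᵥ x) :
    (realForm A).PosDef := by
  classical
  have hunit : IsUnit (realForm A) := by
    rw [isUnit_iff_isUnit_det, ← Int.cast_det, isUnit_iff_ne_zero]
    exact_mod_cast det_ne_zero_of_pos hpos
  have hherm : (realForm A).IsHermitian := by
    rw [Matrix.IsHermitian, conjTranspose_eq_transpose_of_trivial]
    exact hsymm.map _
  exact (PosSemidef.posDef_iff_isUnit
    (.of_dotProduct_mulVec_nonneg hherm fun v => realForm_nonneg hpos v)).mpr hunit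

variable [DecidableEq ι]

/-- `A` is the Gram matrix of an even positive definite lattice, and `N` is a multiple of its
level: `N • A⁻¹` is an even integer matrix, written as `B` below to avoid inverses over `ℚ`. -/
structure IsEvenOfLevel (A : Matrix ι ι ℤ) (N : ℕ) : Prop where
  isSymm : A.IsSymm
  even_diag : ∀ i, 2 ∣ A i i
  pos : ∀ x : ι → ℤ, x ≠ 0 → 0 < x ⬝ᵥ A *ᵥ x
  level_pos : 0 < N
  exists_mul_eq : ∃ B : Matrix ι ι ℤ, (∀ i, 2 ∣ B i i) ∧ A * B = (N : ℤ) • 1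

lemma mul_eq_smul_one_of_smul_inv_eq {N : ℕ} {B : Matrix ι ι ℤ} (hdet : A.det ≠ 0)
    (hB : (N : ℚ) • (A.map (Int.cast : ℤ → ℚ))⁻¹ = B.map (Int.cast : ℤ → ℚ)) :
    A * B = (N : ℤ) • 1 := by
  have hunit : IsUnit (A.map (Int.cast : ℤ → ℚ)).det := by
    rw [← Int.cast_det, isUnit_iff_ne_zero]
    exact_mod_cast hdet
  refine Matrix.map_injective (Int.cast_injective (α := ℚ)) ?_
  beta_reduce
  rw [Matrix.map_mul_intCast, ← hB, Matrix.mul_smul, mul_nonsing_inv _ hunit]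
  ext i j
  rw [map_apply, Matrix.smul_apply, Matrix.smul_apply, one_apply, one_apply]
  split_ifs <;> simp

namespace IsEvenOfLevel

variable {N : ℕ} (hA : IsEvenOfLevel A N)

include hA

lemma posDef : (realForm A).PosDef := posDef_realForm hA.isSymm hA.pos

lemma isSymm_realForm : (realForm A).IsSymm := hA.isSymm.map _

lemma isUnit_det_realForm : IsUnit (realForm A).det := hA.posDef.det_pos.ne'.isUnit

lemma exists_realForm_mulVec_eq (w : ι → ℝ) : ∃ v, realForm A *ᵥ v = w :=
  ⟨(realForm A)⁻¹ *ᵥ w, by rw [mulVec_mulVec, mul_nonsing_inv _ hA.isUnit_det_realForm, one_mulVec]⟩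

lemma exists_dotProduct_intCast_self (y : ι → ℤ) :
    ∃ m : ℤ, (Int.cast ∘ y) ⬝ᵥ realForm A *ᵥ (Int.cast ∘ y) = 2 * m := by
  obtain ⟨m, hm⟩ := even_dotProduct_mulVec_self hA.isSymm hA.even_diag y
  refine ⟨m, ?_⟩
  rw [realForm_mulVec_intCast, dotProduct_intCast, hm]
  push_cast
  ring

lemma exists_even_isSymm_smul_eq :
    ∃ B : Matrix ι ι ℤ, B.IsSymm ∧ (∀ i, 2 ∣ B i i) ∧ ∀ (x : ι → ℝ) (u : ι → ℤ),
      realForm A *ᵥ x = Int.cast ∘ u → (N : ℝ) • x = Int.cast ∘ (B *ᵥ u) := by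
  obtain ⟨B, hB, hAB⟩ := hA.exists_mul_eq
  have hN : (N : ℤ) ≠ 0 := by exact_mod_cast hA.level_pos.ne'
  have hBA : Bᵀ * A = (N : ℤ) • 1 := by simpa [hA.isSymm.eq] using congrArg transpose hAB
  have hsymm : Bᵀ = B := by
    have h : Bᵀ * (A * B) = Bᵀ * A * B := (Matrix.mul_assoc _ _ _).symm
    rw [hAB, hBA, Matrix.mul_smul, Matrix.smul_mul, Matrix.mul_one, Matrix.one_mul] at h
    exact smul_right_injective _ hN h
  refine ⟨B, hsymm, hB, fun x u hu => ?_⟩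
  refine mulVec_injective_of_isUnit ((isUnit_iff_isUnit_det _).mpr hA.isUnit_det_realForm) ?_
  rw [mulVec_smul, hu, realForm_mulVec_intCast, mulVec_mulVec, hAB, smul_mulVec, one_mulVec]
  funext i
  simp

lemma exists_natCast_smul_eq {x : ι → ℝ} (hx : IsDualVector A x) :
    ∃ z : ι → ℤ, (N : ℝ) • x = Int.cast ∘ z := by
  obtain ⟨B, -, -, hB⟩ := hA.exists_even_isSymm_smul_eq
  obtain ⟨u, hu⟩ := hx
  exact ⟨B *ᵥ u, hB x u hu⟩

lemma exists_natCast_mul_dotProduct_eq {x : ι → ℝ} (hx : IsDualVector A x) :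
    ∃ m : ℤ, N * (x ⬝ᵥ realForm A *ᵥ x) = 2 * m := by
  obtain ⟨B, hsymm, heven, hB⟩ := hA.exists_even_isSymm_smul_eq
  obtain ⟨u, hu⟩ := hx
  obtain ⟨m, hm⟩ := even_dotProduct_mulVec_self hsymm heven u
  refine ⟨m, ?_⟩
  rw [← smul_eq_mul, ← smul_dotProduct, hB x u hu, hu, dotProduct_intCast, dotProduct_comm, hm]
  push_cast
  ring

end IsEvenOfLevel

end EvenLattice

section Phase

variable {ι : Type*} [Fintype ι]

/-- The character of second degree `v ↦ exp (πi t Q[v])`. -/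
noncomputable def phase (Q : Matrix ι ι ℝ) (t : ℂ) (v : ι → ℝ) : ℂ :=
  cexp (π * Complex.I * t * (v ⬝ᵥ Q *ᵥ v : ℝ))

lemma cexp_pi_mul_I_mul_two_mul_intCast (m : ℤ) : cexp (π * Complex.I * (2 * m)) = 1 :=
  Complex.exp_eq_one_iff.mpr ⟨m, by ring⟩

lemma phase_eq_one {Q : Matrix ι ι ℝ} {t : ℂ} {v : ι → ℝ} {m : ℤ}
    (h : t * (v ⬝ᵥ Q *ᵥ v : ℝ) = 2 * m) : phase Q t v = 1 := by
  rw [phase, mul_assoc, h, cexp_pi_mul_I_mul_two_mul_intCast]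

lemma phase_add_left (Q : Matrix ι ι ℝ) (s t : ℂ) (v : ι → ℝ) :
    phase Q (s + t) v = phase Q s v * phase Q t v := by
  rw [phase, phase, phase, ← Complex.exp_add]
  ring_nf

lemma phase_smul (Q : Matrix ι ι ℝ) (t : ℂ) (c : ℝ) (v : ι → ℝ) :
    phase Q t (c • v) = phase Q (c ^ 2 * t) v := by
  rw [phase, phase, dotProduct_mulVec_smul_self]
  push_cast
  ring_nf

lemma phase_add {Q : Matrix ι ι ℝ} (hQ : Q.IsSymm) (t : ℂ) (v w : ι → ℝ) :
    phase Q t (v + w) =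
      phase Q t v * cexp (π * Complex.I * (2 * (t * (v ⬝ᵥ Q *ᵥ w : ℝ)))) * phase Q t w := by
  rw [phase, phase, phase, dotProduct_mulVec_add_self hQ, ← Complex.exp_add, ← Complex.exp_add]
  push_cast
  ring_nf

lemma phase_add_smul {Q : Matrix ι ι ℝ} (hQ : Q.IsSymm) (b : ℤ) {d : ℝ} (hd : d ≠ 0)
    {v w : ι → ℝ} {m : ℤ} (hvw : v ⬝ᵥ Q *ᵥ w = m) :
    phase Q (b / d) (v + d • w) = phase Q (b / d) v * phase Q (b * d) w := by
  have hd' : (d : ℂ) ≠ 0 := ofReal_ne_zero.mpr hd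
  have hcross : (b / d : ℂ) * (v ⬝ᵥ Q *ᵥ (d • w) : ℝ) = (b * m : ℤ) := by
    rw [mulVec_smul, dotProduct_smul, smul_eq_mul, hvw]
    push_cast
    field_simp
  have hsq : (d : ℂ) ^ 2 * (b / d) = b * d := by field_simp
  rw [phase_add hQ, hcross, cexp_pi_mul_I_mul_two_mul_intCast, mul_one, phase_smul, hsq]

-- Completing the square; `1 / d = a - b * c / d` for the linear term.
lemma phase_mul_character {Q : Matrix ι ι ℝ} (hQ : Q.IsSymm) {a b d : ℂ} {c : ℝ} (hd : d ≠ 0)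
    (hdet : a * d - b * c = 1) (v w : ι → ℝ) :
    phase Q (b / d) w * cexp (2 * π * Complex.I / d * (v ⬝ᵥ Q *ᵥ w : ℝ)) * phase Q (-(c / d)) v =
      cexp (2 * π * Complex.I * (a * (v ⬝ᵥ Q *ᵥ w : ℝ))) *
        phase Q (b / d) (w + (-c) • v) * phase Q (c * -a) v := by
  rw [phase_add hQ, mulVec_smul, dotProduct_smul, dotProduct_mulVec_comm_of_isSymm hQ w, phase_smul]
  simp only [phase, smul_eq_mul, ← Complex.exp_add]
  congr 1
  push_cast
  field_simp
  linear_combination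
    (c * (v ⬝ᵥ Q *ᵥ v : ℝ) - 2 * (v ⬝ᵥ Q *ᵥ w : ℝ)) * hdet

end Phase

section GaussSum

variable {ι : Type*}

lemma apply_eq_apply_zmod_cast {d : ℕ} {M : Type*} {f : (ι → ℤ) → M}
    (hf : ∀ z y, f (z + (d : ℤ) • y) = f z) (z : ι → ℤ) :
    f z = f (ZMod.cast ∘ (Int.cast ∘ z : ι → ZMod d)) := by
  rw [← hf (ZMod.cast ∘ _) fun i => z i / d]
  congr 1
  funext i
  simp [ZMod.coe_intCast, Int.emod_add_mul_ediv]

variable [Fintype ι] [DecidableEq ι]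

lemma sum_zmod_cast_add {d : ℕ} [NeZero d] {M : Type*} [AddCommMonoid M] {f : (ι → ℤ) → M}
    (hf : ∀ z y, f (z + (d : ℤ) • y) = f z) (z : ι → ℤ) :
    ∑ r : ι → ZMod d, f (ZMod.cast ∘ r + z) = ∑ r : ι → ZMod d, f (ZMod.cast ∘ r) := by
  refine Fintype.sum_equiv (Equiv.addRight (Int.cast ∘ z : ι → ZMod d)) _ _ fun r => ?_
  rw [apply_eq_apply_zmod_cast hf]
  congr 2
  funext i
  simp

/-- The quadratic Gauss sum `∑ exp (πi (b / d) A[r])` over `r` modulo `d`. -/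
noncomputable def formGaussSum (A : Matrix ι ι ℤ) (b : ℤ) (d : ℕ) [NeZero d] : ℂ :=
  ∑ r : ι → ZMod d, phase (realForm A) (b / d) (Int.cast ∘ (ZMod.cast ∘ r : ι → ℤ))

namespace IsEvenOfLevel

variable {A : Matrix ι ι ℤ} {N : ℕ} (hA : IsEvenOfLevel A N)

include hA

lemma phase_intCast (t : ℤ) (y : ι → ℤ) : phase (realForm A) t (Int.cast ∘ y) = 1 := by
  obtain ⟨m, hm⟩ := hA.exists_dotProduct_intCast_self y
  refine phase_eq_one (m := t * m) ?_
  rw [hm]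
  push_cast
  ring

lemma phase_level_mul {x : ι → ℝ} (hx : IsDualVector A x) (t : ℤ) :
    phase (realForm A) (N * t) x = 1 := by
  obtain ⟨m, hm⟩ := hA.exists_natCast_mul_dotProduct_eq hx
  refine phase_eq_one (m := t * m) ?_
  have hm' : (N : ℂ) * (x ⬝ᵥ realForm A *ᵥ x : ℝ) = 2 * m := by exact_mod_cast hm
  push_cast
  linear_combination (t : ℂ) * hm'

lemma phase_div_periodic {x : ι → ℝ} (hx : IsDualVector A x) (b : ℤ) (d : ℕ) [NeZero d]
    (z y : ι → ℤ) :
    phase (realForm A) (b / d) (x + Int.cast ∘ (z + (d : ℤ) • y)) =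
      phase (realForm A) (b / d) (x + Int.cast ∘ z) := by
  obtain ⟨m, hm⟩ := hx.exists_dotProduct_mulVec_eq y
  have hpair : (x + Int.cast ∘ z) ⬝ᵥ realForm A *ᵥ (Int.cast ∘ y) = (m + z ⬝ᵥ A *ᵥ y : ℤ) := by
    rw [add_dotProduct, dotProduct_mulVec_comm_of_isSymm hA.isSymm_realForm, hm,
      realForm_mulVec_intCast, dotProduct_intCast]
    push_cast
    rfl
  have hsplit : x + Int.cast ∘ (z + (d : ℤ) • y) =
      x + Int.cast ∘ z + (d : ℝ) • (Int.cast ∘ y : ι → ℝ) := by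
    funext i
    simp [add_assoc]
  have h := phase_add_smul hA.isSymm_realForm b (Nat.cast_ne_zero.mpr (NeZero.ne d)) hpair
  have hone := hA.phase_intCast (b * d) y
  push_cast at h hone
  rw [hsplit, h, hone, mul_one]

variable {a b c : ℤ} {d : ℕ} (hdet : a * d - b * (N * c) = 1)

include hdet

lemma phase_mul_smul {x : ι → ℝ} (hx : IsDualVector A x) :
    phase (realForm A) (b * d) ((a : ℝ) • x) = phase (realForm A) (a * b) x := by
  have hcoef : ((a : ℝ) : ℂ) ^ 2 * (b * d) = a * b + N * (a * b ^ 2 * c : ℤ) := by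
    have : (a * d - b * (N * c) : ℂ) = 1 := by exact_mod_cast hdet
    push_cast
    linear_combination (a * b : ℂ) * this
  rw [phase_smul, hcoef, phase_add_left, hA.phase_level_mul hx, mul_one]

variable [NeZero d]

-- As `x = a d x - b c (N x)` and `N x` is integral, `x` may be replaced by `d (a x)`.
lemma sum_phase_add_dual {x : ι → ℝ} (hx : IsDualVector A x) :
    ∑ r : ι → ZMod d, phase (realForm A) (b / d) (x + Int.cast ∘ (ZMod.cast ∘ r : ι → ℤ)) =
      phase (realForm A) (a * b) x * formGaussSum A b d := by
  obtain ⟨z, hz⟩ := hA.exists_natCast_smul_eq (hx.intCast_smul (-(b * c)))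
  have hperiodic (w y : ι → ℤ) : phase (realForm A) (b / d) (Int.cast ∘ (w + (d : ℤ) • y)) =
      phase (realForm A) (b / d) (Int.cast ∘ w) := by
    simpa only [zero_add] using hA.phase_div_periodic (isDualVector_zero A) b d w y
  rw [formGaussSum, ← sum_zmod_cast_add (f := fun w => phase _ _ (Int.cast ∘ w)) hperiodic z,
    Finset.mul_sum]
  refine Finset.sum_congr rfl fun r _ => ?_
  obtain ⟨m, hm⟩ := (hx.intCast_smul a).exists_dotProduct_mulVec_eq (ZMod.cast ∘ r + z)
  have hsplit : x + Int.cast ∘ (ZMod.cast ∘ r : ι → ℤ) =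
      Int.cast ∘ (ZMod.cast ∘ r + z) + (d : ℝ) • ((a : ℝ) • x) := by
    have hdet' : (a * d - b * (N * c) : ℝ) = 1 := by exact_mod_cast hdet
    funext i
    have hzi := congrFun hz i
    simp only [Pi.smul_apply, smul_eq_mul, Function.comp_apply] at hzi
    push_cast at hzi
    simp only [Pi.add_apply, Pi.smul_apply, smul_eq_mul, Function.comp_apply, Int.cast_add, ← hzi]
    linear_combination -x i * hdet'
  have h := phase_add_smul hA.isSymm_realForm b (Nat.cast_ne_zero.mpr (NeZero.ne d)) hm
  push_cast at h
  rw [hsplit, h, hA.phase_mul_smul hdet hx, mul_comm]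

lemma phase_add_intCast_mul_character {v : ι → ℝ} (hv : IsDualVector A v) (x : ι → ℝ)
    (y : ι → ℤ) :
    phase (realForm A) (b / d) (x + Int.cast ∘ y) *
        cexp (2 * π * Complex.I / d * (v ⬝ᵥ realForm A *ᵥ (x + Int.cast ∘ y) : ℝ)) *
        phase (realForm A) (-(N * c / d)) v =
      cexp (2 * π * Complex.I * (a * (v ⬝ᵥ realForm A *ᵥ x : ℝ))) *
        phase (realForm A) (b / d) (x + Int.cast ∘ y + ((-(N * c) : ℤ) : ℝ) • v) := by
  obtain ⟨m, hm⟩ := hv.exists_dotProduct_mulVec_eq y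
  have hpair : v ⬝ᵥ realForm A *ᵥ (x + Int.cast ∘ y) = v ⬝ᵥ realForm A *ᵥ x + m := by
    rw [mulVec_add, dotProduct_add,
      dotProduct_mulVec_comm_of_isSymm hA.isSymm_realForm v (Int.cast ∘ y), hm]
  have hlevel : phase (realForm A) (((N * c : ℤ) : ℝ) * -a) v = 1 := by
    have := hA.phase_level_mul hv (-(a * c))
    push_cast at this ⊢
    rw [← this]
    ring_nf
  have hperiod : cexp (2 * π * Complex.I * (a * (v ⬝ᵥ realForm A *ᵥ x + m : ℝ))) =
      cexp (2 * π * Complex.I * (a * (v ⬝ᵥ realForm A *ᵥ x : ℝ))) :=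
    Complex.exp_eq_exp_iff_exists_int.mpr ⟨a * m, by push_cast; ring⟩
  have hphase := phase_mul_character hA.isSymm_realForm (a := a) (b := b) (c := (N * c : ℤ))
    (Nat.cast_ne_zero.mpr (NeZero.ne d)) (by exact_mod_cast hdet) v (x + Int.cast ∘ y)
  rw [hlevel, hpair, mul_one, hperiod] at hphase
  rw [hpair]
  push_cast at hphase ⊢
  exact hphase

lemma sum_phase_mul_character {x v : ι → ℝ} (hx : IsDualVector A x) (hv : IsDualVector A v) :
    ∑ r : ι → ZMod d, phase (realForm A) (b / d) (x + Int.cast ∘ (ZMod.cast ∘ r : ι → ℤ)) *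
        cexp (2 * π * Complex.I / d *
          (v ⬝ᵥ realForm A *ᵥ (x + Int.cast ∘ (ZMod.cast ∘ r : ι → ℤ)) : ℝ)) *
        phase (realForm A) (-(N * c / d)) v =
      cexp (2 * π * Complex.I * (a * (v ⬝ᵥ realForm A *ᵥ x : ℝ))) *
        (phase (realForm A) (a * b) x * formGaussSum A b d) := by
  obtain ⟨z, hz⟩ := hA.exists_natCast_smul_eq (hv.intCast_smul (-c))
  have hz' : (Int.cast ∘ z : ι → ℝ) = ((-(N * c) : ℤ) : ℝ) • v := by
    rw [← hz, smul_smul]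
    push_cast
    ring_nf
  rw [← hA.sum_phase_add_dual hdet hx, ← sum_zmod_cast_add
    (f := fun w => phase _ _ (x + Int.cast ∘ w)) (hA.phase_div_periodic hx b d) z, Finset.mul_sum]
  refine Finset.sum_congr rfl fun r _ => ?_
  have hshift : x + Int.cast ∘ (ZMod.cast ∘ r + z) =
      x + Int.cast ∘ (ZMod.cast ∘ r : ι → ℤ) + ((-(N * c) : ℤ) : ℝ) • v := by
    rw [add_assoc, ← hz']
    funext i
    simp
  rw [hA.phase_add_intCast_mul_character hdet hv, hshift]

end IsEvenOfLevel

end GaussSum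

section Transformation

variable {ι : Type*} [Fintype ι]

/-- Euclidean division by `d` as an equivalence. -/
def zmodProdIntEquiv (d : ℕ) [NeZero d] : ZMod d × ℤ ≃ ℤ where
  toFun p := p.1.cast + d * p.2
  invFun z := (z, z / d)
  left_inv := by
    rintro ⟨r, y⟩
    have hd : (d : ℤ) ≠ 0 := by exact_mod_cast NeZero.ne d
    have hr : (r.cast : ℤ) / d = 0 := by
      rw [ZMod.cast_eq_val]
      exact Int.ediv_eq_zero_of_lt (by positivity) (by exact_mod_cast r.val_lt)
    ext
    · simp
    · simp [Int.add_mul_ediv_left _ _ hd, hr]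
  right_inv z := by
    change ((z : ZMod d).cast + d * (z / d) : ℤ) = z
    rw [ZMod.coe_intCast]
    exact Int.emod_add_mul_ediv z d

lemma tsum_eq_sum_tsum_residues [DecidableEq ι] (d : ℕ) [NeZero d] {F : (ι → ℤ) → ℂ}
    (hF : Summable F) :
    ∑' z, F z = ∑ r : ι → ZMod d, ∑' y : ι → ℤ, F (ZMod.cast ∘ r + (d : ℤ) • y) := by
  let e : (ι → ZMod d) × (ι → ℤ) ≃ (ι → ℤ) :=
    (Equiv.arrowProdEquivProdArrow ι (fun _ => ZMod d) (fun _ => ℤ)).symm.trans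
      (Equiv.piCongrRight fun _ => zmodProdIntEquiv d)
  rw [← e.tsum_eq]
  exact (Summable.tsum_prod (e.summable_iff.mpr hF)).trans (tsum_fintype _)

lemma sum_mul_mul_tsum {α β : Type*} [Fintype α] (φ : α → ℂ) (q : ℂ) {g : α → β → ℂ}
    (hg : ∀ r, Summable (g r)) :
    ∑ r, φ r * (q * ∑' y, g r y) = q * ∑' y, ∑ r, φ r * g r y := by
  rw [Summable.tsum_finsetSum fun r _ => (hg r).mul_left _, Finset.mul_sum]
  refine Finset.sum_congr rfl fun r _ => ?_
  rw [tsum_mul_left]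
  ring

lemma gaussian_add (Q : Matrix ι ι ℝ) (s t : ℂ) (l m : ι → ℂ) (v : ι → ℝ) :
    gaussian Q (s + t) (l + m) v =
      gaussian Q s l v * (phase Q t v * cexp (m ⬝ᵥ (ofReal ∘ v))) := by
  rw [gaussian, gaussian, phase, ← Complex.exp_add, ← Complex.exp_add, add_dotProduct]
  ring_nf

lemma gaussian_smul (Q : Matrix ι ι ℝ) (τ : ℂ) (l : ι → ℂ) (c : ℝ) (v : ι → ℝ) :
    gaussian Q τ l (c • v) = gaussian Q (c ^ 2 * τ) ((c : ℂ) • l) v := by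
  have hv : ofReal ∘ (c • v) = (c : ℂ) • (ofReal ∘ v) := by
    funext i
    simp
  rw [gaussian, gaussian, dotProduct_mulVec_smul_self, hv, dotProduct_smul, smul_dotProduct]
  push_cast
  ring_nf

lemma residueParameter_eq {a b c d τ τ' j σ : ℂ} (hd : d ≠ 0) (hτ : τ ≠ 0)
    (hdet : a * d - b * c = 1) (hj : j = c * τ + d) (hττ' : τ' * j = a * τ + b)
    (hσ : σ = d ^ 2 * τ' - b * d) : j ≠ 0 ∧ σ = d * τ / j ∧ -σ⁻¹ = -τ⁻¹ + -(c / d) := by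
  have hσj : σ * j = d * τ := by
    rw [hσ]
    linear_combination d ^ 2 * hττ' - b * d * hj + d * τ * hdet
  have hj₀ : j ≠ 0 := right_ne_zero_of_mul (hσj ▸ mul_ne_zero hd hτ)
  have hσ' : σ = d * τ / j := by rw [← hσj, mul_div_cancel_right₀ _ hj₀]
  refine ⟨hj₀, hσ', ?_⟩
  rw [hσ']
  field_simp
  rw [hj]
  ring

variable [DecidableEq ι]

namespace IsEvenOfLevel

variable {A : Matrix ι ι ℤ} {N : ℕ} (hA : IsEvenOfLevel A N)

include hA

lemma periodization_gaussian_eq_sum_residues {x : ι → ℝ} (hx : IsDualVector A x) (b : ℤ) (d : ℕ)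
    [NeZero d] {σ τ : ℂ} (hτ : 0 < τ.im) (hσ : σ = d ^ 2 * τ - b * d) (l : ι → ℂ) :
    periodization (gaussian (realForm A) τ l) x = ∑ r : ι → ZMod d,
      phase (realForm A) (b / d) (x + Int.cast ∘ (ZMod.cast ∘ r : ι → ℤ)) *
        periodization (gaussian (realForm A) σ ((d : ℂ) • l))
          ((d : ℝ)⁻¹ • (x + Int.cast ∘ (ZMod.cast ∘ r : ι → ℤ))) := by
  rw [periodization, tsum_eq_sum_tsum_residues d
    ((hasExpDecay_gaussian hA.posDef hτ l).summable_add_intCast x)]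
  refine Finset.sum_congr rfl fun r _ => ?_
  rw [periodization, ← tsum_mul_left]
  refine tsum_congr fun y => ?_
  set w : ι → ℝ := x + Int.cast ∘ (ZMod.cast ∘ r : ι → ℤ)
  have hd : (d : ℂ) ≠ 0 := Nat.cast_ne_zero.mpr (NeZero.ne d)
  have hsplit : x + Int.cast ∘ (ZMod.cast ∘ r + (d : ℤ) • y) =
      (d : ℝ) • ((d : ℝ)⁻¹ • w + Int.cast ∘ y) := by
    have hd' : (d : ℝ) ≠ 0 := Nat.cast_ne_zero.mpr (NeZero.ne d)
    rw [smul_add, smul_inv_smul₀ hd']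
    funext i
    simp [w, add_assoc]
  have hcoef : (((d : ℝ) : ℂ) ^ 2 * τ) = σ + (d : ℝ) ^ 2 * (b / d) := by
    rw [hσ]
    push_cast
    field_simp
    ring
  rw [← hA.phase_div_periodic hx b d _ y, hsplit, gaussian_smul, hcoef,
    ← add_zero (((d : ℝ) : ℂ) • l), gaussian_add, phase_smul]
  simp [mul_comm]

lemma sum_phase_mul_gaussian_inv {x : ι → ℝ} (hx : IsDualVector A x) {a b c : ℤ} {d : ℕ}
    [NeZero d] (hdet : a * d - b * (N * c) = 1) (s : ℂ) (m : ι → ℂ) (y : ι → ℤ) :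
    ∑ r : ι → ZMod d, phase (realForm A) (b / d) (x + Int.cast ∘ (ZMod.cast ∘ r : ι → ℤ)) *
        gaussian (realForm A)⁻¹ (s + -(N * c / d)) (m + (2 * π * Complex.I) •
          (ofReal ∘ ((d : ℝ)⁻¹ • (x + Int.cast ∘ (ZMod.cast ∘ r : ι → ℤ))))) (Int.cast ∘ y) =
      phase (realForm A) (a * b) x * formGaussSum A b d *
        gaussian (realForm A)⁻¹ s (m + (2 * π * Complex.I) • (ofReal ∘ ((a : ℝ) • x)))
          (Int.cast ∘ y) := by
  obtain ⟨v, hv⟩ := hA.exists_realForm_mulVec_eq (Int.cast ∘ y)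
  have hphase (t : ℂ) : phase (realForm A)⁻¹ t (Int.cast ∘ y) = phase (realForm A) t v := by
    rw [phase, phase, ← hv, mulVec_mulVec, nonsing_inv_mul _ hA.isUnit_det_realForm, one_mulVec,
      dotProduct_comm]
  have hpair (t : ℝ) (w : ι → ℝ) :
      ((2 * π * Complex.I) • (ofReal ∘ (t • w))) ⬝ᵥ (ofReal ∘ (Int.cast ∘ y : ι → ℝ)) =
        2 * π * Complex.I * (t * (v ⬝ᵥ realForm A *ᵥ w : ℝ)) := by
    rw [dotProduct_mulVec_comm_of_isSymm hA.isSymm_realForm, hv]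
    simp [dotProduct, Finset.mul_sum, mul_assoc]
  have hgauss (t : ℂ) (w : ι → ℂ) := gaussian_add (realForm A)⁻¹ s t m w (Int.cast ∘ y)
  have hone : phase (realForm A) 0 v = 1 := by simp [phase]
  have hsum := hA.sum_phase_mul_character hdet hx ⟨y, hv⟩
  have hright := hgauss 0 ((2 * π * Complex.I) • (ofReal ∘ ((a : ℝ) • x)))
  rw [add_zero, hphase, hone, one_mul, hpair] at hright
  simp_rw [hgauss, hphase, hpair, hright]
  rw [mul_left_comm, mul_comm (phase (realForm A) (a * b) x * _), ofReal_intCast]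
  refine Eq.trans ?_ (congrArg (gaussian (realForm A)⁻¹ s m (Int.cast ∘ y) * ·) hsum)
  rw [Finset.mul_sum]
  refine Finset.sum_congr rfl fun r _ => ?_
  push_cast
  ring_nf

theorem periodization_gaussian_Gamma0 {k : ℕ} (hk : Fintype.card ι = 2 * k) {x : ι → ℝ}
    (hx : IsDualVector A x) {a b c : ℤ} {d : ℕ} [NeZero d] (hdet : a * d - b * (N * c) = 1)
    {τ τ' j : ℂ} (hτ : 0 < τ.im) (hτ' : 0 < τ'.im) (hj : j = N * c * τ + d)
    (hττ' : τ' * j = a * τ + b) (l : ι → ℂ) :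
    periodization (gaussian (realForm A) τ' l) x =
      formGaussSum A b d / d ^ k * phase (realForm A) (a * b) x * j ^ k *
        cexp (-Complex.I * (N * c) * j / (4 * π) * (l ⬝ᵥ (realForm A)⁻¹.map ofReal *ᵥ l)) *
        periodization (gaussian (realForm A) τ (j • l)) ((a : ℝ) • x) := by
  obtain ⟨σ, hσ⟩ : ∃ σ : ℂ, σ = d ^ 2 * τ' - b * d := ⟨_, rfl⟩
  have hd : (d : ℂ) ≠ 0 := Nat.cast_ne_zero.mpr (NeZero.ne d)
  have hσim : 0 < σ.im := by
    have : 0 < (d : ℝ) := by exact_mod_cast NeZero.pos d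
    simp [hσ, sq, mul_assoc, this, hτ']
  have hτ₀ : τ ≠ 0 := by rintro rfl; simp at hτ
  have hdet' : (a * d - b * (N * c) : ℂ) = 1 := by exact_mod_cast hdet
  obtain ⟨hj₀, hσ', hinv⟩ := residueParameter_eq hd hτ₀ hdet' hj hττ' hσ
  have hlin : σ⁻¹ • ((realForm A)⁻¹.map ofReal *ᵥ ((d : ℂ) • l)) =
      τ⁻¹ • ((realForm A)⁻¹.map ofReal *ᵥ (j • l)) := by
    rw [mulVec_smul, mulVec_smul, smul_smul, smul_smul, hσ']
    congr 1
    field_simp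
  have hbase : Complex.I / σ = Complex.I / τ * j / d := by
    rw [hσ']
    field_simp
  have hexp (z : ℂ) : Complex.I / (4 * π * σ) * (d ^ 2 * z) =
      -Complex.I * (N * c) * j / (4 * π) * z + Complex.I / (4 * π * τ) * (j ^ 2 * z) := by
    rw [hσ', hj]
    rw [hj] at hj₀
    field_simp
    ring
  rw [hA.periodization_gaussian_eq_sum_residues hx b d hτ' hσ]
  simp_rw [periodization_gaussian hA.posDef hk hσim]
  rw [sum_mul_mul_tsum]
  swap
  · intro r
    simpa only [zero_add] using (hasExpDecay_gaussian hA.posDef.inv (im_neg_inv_pos hσim)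
        _).summable_add_intCast 0
  simp_rw [hinv, hlin, hA.sum_phase_mul_gaussian_inv hx hdet]
  rw [tsum_mul_left, periodization_gaussian hA.posDef hk hτ, hbase, dotProduct_mulVec_smul_self,
    dotProduct_mulVec_smul_self, hexp, Complex.exp_add]
  ring

end IsEvenOfLevel

end Transformation

section PowerSeries

lemma hasSum_tsum_mul_cexp {α : Type*} {E L : α → ℂ}
    (hs : ∀ R : ℝ, Summable fun z => ‖E z‖ * Real.exp (R * ‖L z‖)) (s : ℂ) :
    HasSum (fun ν : ℕ => ((∑' z, E z * L z ^ ν) / ν.factorial) * s ^ ν)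
      (∑' z, E z * cexp (s * L z)) := by
  have hexp (w : ℂ) : HasSum (fun ν : ℕ => w ^ ν / ν.factorial) (cexp w) := by
    rw [Complex.exp_eq_exp_ℂ]
    simpa only [div_eq_inv_mul, smul_eq_mul] using
      NormedSpace.exp_series_hasSum_exp' (𝕂 := ℂ) w
  have hrexp (w : ℝ) : HasSum (fun ν : ℕ => w ^ ν / ν.factorial) (Real.exp w) := by
    rw [Real.exp_eq_exp_ℝ]
    simpa only [div_eq_inv_mul, smul_eq_mul] using
      NormedSpace.exp_series_hasSum_exp' (𝕂 := ℝ) w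
  have hsum : Summable fun p : α × ℕ => E p.1 * ((s * L p.1) ^ p.2 / p.2.factorial) := by
    refine Summable.of_norm ?_
    rw [summable_prod_of_nonneg fun _ => norm_nonneg _]
    have hfiber (z : α) : HasSum (fun ν : ℕ => ‖E z * ((s * L z) ^ ν / ν.factorial)‖)
        (‖E z‖ * Real.exp (‖s‖ * ‖L z‖)) := by
      simpa [mul_pow] using (hrexp (‖s‖ * ‖L z‖)).mul_left ‖E z‖
    exact ⟨fun z => (hfiber z).summable, (hs ‖s‖).congr fun z => (hfiber z).tsum_eq.symm⟩
  have hswap := hsum.prod_symm.prod.hasSum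
  simp only [Prod.swap_prod_mk] at hswap
  rw [Summable.tsum_comm (f := fun z (ν : ℕ) => E z * ((s * L z) ^ ν / ν.factorial)) hsum] at hswap
  simp only [tsum_mul_left, (hexp _).tsum_eq] at hswap
  refine hswap.congr_fun fun ν => ?_
  rw [div_mul_eq_mul_div, ← tsum_mul_right, ← tsum_div_const]
  refine tsum_congr fun z => ?_
  rw [mul_pow]
  ring

variable {c c' : ℕ → ℂ} {F F' : ℂ → ℂ}

lemma hasFPowerSeriesAt_ofScalars_of_hasSum (h : ∀ s, HasSum (fun ν => c ν * s ^ ν) (F s)) :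
    HasFPowerSeriesAt F (FormalMultilinearSeries.ofScalars ℂ c) 0 := by
  rw [hasFPowerSeriesAt_iff]
  refine Filter.Eventually.of_forall fun s => ?_
  simpa [FormalMultilinearSeries.coeff_ofScalars, mul_comm] using h s

lemma coeff_eq_of_hasSum (h : ∀ s, HasSum (fun ν => c ν * s ^ ν) (F s))
    (h' : ∀ s, HasSum (fun ν => c' ν * s ^ ν) (F s)) : c = c' := by
  have := (hasFPowerSeriesAt_ofScalars_of_hasSum h).eq_formalMultilinearSeries
    (hasFPowerSeriesAt_ofScalars_of_hasSum h')
  funext ν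
  simpa [FormalMultilinearSeries.coeff_ofScalars] using congrArg (·.coeff ν) this

lemma hasDerivAt_zero_of_hasSum (h : ∀ s, HasSum (fun ν => c ν * s ^ ν) (F s)) :
    HasDerivAt F (c 1) 0 := by
  simpa [FormalMultilinearSeries.coeff_ofScalars] using
    (hasFPowerSeriesAt_ofScalars_of_hasSum h).hasDerivAt

lemma coeff_zero_of_hasSum (h : ∀ s, HasSum (fun ν => c ν * s ^ ν) (F s)) : c 0 = F 0 := by
  simpa [zero_pow_eq] using (hasSum_single 0 fun ν hν => by simp [hν]).unique (h 0)

-- A factor `exp (q s²)` does not affect the coefficients of degree at most one.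
lemma coeff_eq_of_eq_mul_cexp_mul (h : ∀ s, HasSum (fun ν => c ν * s ^ ν) (F s))
    (h' : ∀ s, HasSum (fun ν => c' ν * s ^ ν) (F' s)) {K q j : ℂ}
    (heq : ∀ s, F s = K * cexp (q * s ^ 2) * F' (j * s)) {ν : ℕ} (hν : ν ≤ 1 ∨ q = 0) :
    c ν = K * j ^ ν * c' ν := by
  rcases hν with hν | rfl
  · interval_cases ν
    · simp [coeff_zero_of_hasSum h, coeff_zero_of_hasSum h', heq]
    · have hgauss : HasDerivAt (fun s : ℂ => K * cexp (q * s ^ 2)) 0 0 := by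
        simpa using (((hasDerivAt_pow 2 (0 : ℂ)).const_mul q).cexp).const_mul K
      have hlin : HasDerivAt (fun s : ℂ => j * s) j 0 := by
        simpa using (hasDerivAt_id (0 : ℂ)).const_mul j
      have hF' : HasDerivAt F' (c' 1) (j * 0) := by
        rw [mul_zero]
        exact hasDerivAt_zero_of_hasSum h'
      have hprod := hgauss.mul (hF'.comp (0 : ℂ) hlin)
      rw [(hasDerivAt_zero_of_hasSum h).unique
        (hprod.congr_of_eventuallyEq (Filter.Eventually.of_forall heq))]
      simp only [Function.comp_apply, mul_zero, zero_mul, zero_add, ne_eq, OfNat.ofNat_ne_zero,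
        not_false_eq_true, zero_pow, Complex.exp_zero, mul_one, pow_one]
      ring
  · refine congrFun (coeff_eq_of_hasSum h (c' := fun ν => K * j ^ ν * c' ν) fun s => ?_) ν
    rw [heq, zero_mul, Complex.exp_zero, mul_one]
    refine ((h' (j * s)).mul_left K).congr_fun fun ν => ?_
    rw [mul_pow]
    ring

end PowerSeries

section SphericalTheta

variable {ι : Type*} [Fintype ι] {Q : Matrix ι ι ℝ} {τ : ℂ} {ν : ℕ}
  {p : (ι → ℝ) → ℂ}

/-- The theta series `∑ p(v) exp (πiτ Q[v])` of the coset `x + ℤ^ι`. -/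
noncomputable def sphericalTheta (Q : Matrix ι ι ℝ) (p : (ι → ℝ) → ℂ) (τ : ℂ) (x : ι → ℝ) : ℂ :=
  periodization (p * phase Q τ) x

lemma sphericalTheta_smul (Q : Matrix ι ι ℝ) (r : ℂ) (p : (ι → ℝ) → ℂ) (τ : ℂ) (x : ι → ℝ) :
    sphericalTheta Q (r • p) τ x = r * sphericalTheta Q p τ x := by
  simp only [sphericalTheta, smul_mul_assoc]
  exact tsum_mul_left

lemma hasExpDecay_norm_phase_mul_exp (hQ : Q.PosDef) (hτ : 0 < τ.im) (l : ι → ℂ) (R : ℝ) :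
    HasExpDecay fun v => (‖phase Q τ v‖ * Real.exp (R * ‖l ⬝ᵥ (ofReal ∘ v)‖) : ℝ) := by
  obtain ⟨C, hC⟩ := exists_exp_neg_mul_add_le hQ (mul_pos Real.pi_pos hτ) (|R| * ∑ i, ‖l i‖)
  refine ⟨C, fun v => le_trans ?_ (hC v)⟩
  rw [Complex.norm_real, Real.norm_of_nonneg (by positivity), phase, Complex.norm_exp,
    ← Real.exp_add, Real.exp_le_exp]
  refine add_le_add (le_of_eq (by simp [Complex.mul_re])) ?_
  rw [mul_assoc]
  gcongr
  · exact le_abs_self R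
  · exact norm_dotProduct_ofReal_le l v

-- The Gaussian with linear term `s l` is the generating function of the theta series of the powers
-- `(l·v)^ν`.
lemma hasSum_sphericalTheta_pow (hQ : Q.PosDef) (hτ : 0 < τ.im) (l : ι → ℂ) (x : ι → ℝ) (s : ℂ) :
    HasSum (fun ν : ℕ =>
        sphericalTheta Q (fun v => (l ⬝ᵥ (ofReal ∘ v)) ^ ν) τ x / ν.factorial * s ^ ν)
      (periodization (gaussian Q τ (s • l)) x) := by
  have hsum (R : ℝ) := Complex.summable_ofReal.mp
    ((hasExpDecay_norm_phase_mul_exp hQ hτ l R).summable_add_intCast x)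
  have hgauss (v : ι → ℝ) :
      gaussian Q τ (s • l) v = phase Q τ v * cexp (s * l ⬝ᵥ (ofReal ∘ v)) := by
    rw [gaussian, phase, ← Complex.exp_add, smul_dotProduct, smul_eq_mul]
  simp only [sphericalTheta, periodization, hgauss, Pi.mul_apply]
  simpa only [mul_comm (phase Q τ _)] using hasSum_tsum_mul_cexp hsum s

variable [DecidableEq ι]

/-- The spherical functions of degree `ν` on `ℝ^ι` with respect to `Q`. They are written in the dual
coordinate `l = Q u`, so that `ᵗu Q v = l·v` and `ᵗu Q u = ᵗl Q⁻¹ l`. -/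
def sphericalFunctions (Q : Matrix ι ι ℝ) (ν : ℕ) : Submodule ℂ ((ι → ℝ) → ℂ) :=
  .span ℂ {p | ∃ l : ι → ℂ, (ν ≤ 1 ∨ l ⬝ᵥ Q⁻¹.map ofReal *ᵥ l = 0) ∧
    p = fun v => (l ⬝ᵥ (ofReal ∘ v)) ^ ν}

lemma one_mem_sphericalFunctions (Q : Matrix ι ι ℝ) : 1 ∈ sphericalFunctions Q 0 :=
  Submodule.subset_span ⟨0, .inl zero_le_one, by ext; simp⟩

lemma apply_smul_of_mem_sphericalFunctions (hp : p ∈ sphericalFunctions Q ν) (c : ℝ) (v : ι → ℝ) :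
    p (c • v) = c ^ ν * p v := by
  induction hp using Submodule.span_induction with
  | mem p hp =>
    obtain ⟨l, -, rfl⟩ := hp
    have : (ofReal ∘ (c • v) : ι → ℂ) = (c : ℂ) • (ofReal ∘ v) := by funext i; simp
    simp only [this, dotProduct_smul, smul_eq_mul, mul_pow]
  | zero => simp
  | add p q _ _ hp hq => rw [Pi.add_apply, Pi.add_apply, hp, hq, mul_add]
  | smul r p _ hp => rw [Pi.smul_apply, Pi.smul_apply, hp, smul_eq_mul, smul_eq_mul, mul_left_comm]

lemma hasExpDecay_mul_phase (hQ : Q.PosDef) (hτ : 0 < τ.im) (hp : p ∈ sphericalFunctions Q ν) :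
    HasExpDecay (p * phase Q τ) := by
  induction hp using Submodule.span_induction with
  | mem p hp =>
    obtain ⟨l, -, rfl⟩ := hp
    obtain ⟨C, hC⟩ := hasExpDecay_norm_phase_mul_exp hQ hτ l 1
    refine ⟨ν.factorial * C, fun v => ?_⟩
    have hpow := Real.pow_div_factorial_le_exp _ (norm_nonneg (l ⬝ᵥ (ofReal ∘ v))) ν
    rw [div_le_iff₀' (by positivity)] at hpow
    calc ‖(l ⬝ᵥ (ofReal ∘ v)) ^ ν * phase Q τ v‖
        ≤ ν.factorial * Real.exp ‖l ⬝ᵥ (ofReal ∘ v)‖ * ‖phase Q τ v‖ := by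
          rw [norm_mul, norm_pow]
          gcongr
      _ = ν.factorial * ‖((‖phase Q τ v‖ * Real.exp (1 * ‖l ⬝ᵥ (ofReal ∘ v)‖) : ℝ) : ℂ)‖ := by
          rw [Complex.norm_real, Real.norm_of_nonneg (by positivity), one_mul]
          ring
      _ ≤ ν.factorial * C * Real.exp (-∑ i, |v i|) := by
          rw [mul_assoc]
          gcongr
          exact hC v
  | zero => exact ⟨0, by simp⟩
  | add p q _ _ hp hq =>
    obtain ⟨C, hC⟩ := hp
    obtain ⟨C', hC'⟩ := hq
    refine ⟨C + C', fun v => ?_⟩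
    rw [add_mul, add_mul]
    exact (norm_add_le _ _).trans (add_le_add (hC v) (hC' v))
  | smul r p _ hp =>
    obtain ⟨C, hC⟩ := hp
    refine ⟨‖r‖ * C, fun v => ?_⟩
    rw [smul_mul_assoc, Pi.smul_apply, norm_smul, mul_assoc]
    gcongr
    exact hC v

lemma sphericalTheta_add (hQ : Q.PosDef) (hτ : 0 < τ.im) {q : (ι → ℝ) → ℂ}
    (hp : p ∈ sphericalFunctions Q ν) (hq : q ∈ sphericalFunctions Q ν) (x : ι → ℝ) :
    sphericalTheta Q (p + q) τ x = sphericalTheta Q p τ x + sphericalTheta Q q τ x := by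
  simp only [sphericalTheta, add_mul]
  exact ((hasExpDecay_mul_phase hQ hτ hp).summable_add_intCast x).tsum_add
    ((hasExpDecay_mul_phase hQ hτ hq).summable_add_intCast x)

lemma IsEvenOfLevel.sphericalTheta_Gamma0 {A : Matrix ι ι ℤ} {N : ℕ} (hA : IsEvenOfLevel A N)
    {k : ℕ} (hk : Fintype.card ι = 2 * k) (hp : p ∈ sphericalFunctions (realForm A) ν)
    {x : ι → ℝ} (hx : IsDualVector A x) {a b c : ℤ} {d : ℕ} [NeZero d]
    (hdet : a * d - b * (N * c) = 1) {τ' j : ℂ} (hτ : 0 < τ.im) (hτ' : 0 < τ'.im)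
    (hj : j = N * c * τ + d) (hττ' : τ' * j = a * τ + b) :
    sphericalTheta (realForm A) p τ' x =
      formGaussSum A b d / d ^ k * phase (realForm A) (a * b) x * j ^ (k + ν) *
        sphericalTheta (realForm A) p τ ((a : ℝ) • x) := by
  induction hp using Submodule.span_induction with
  | mem p hp =>
    obtain ⟨l, hl, rfl⟩ := hp
    have hcoeff := coeff_eq_of_eq_mul_cexp_mul
      (hasSum_sphericalTheta_pow hA.posDef hτ' l x)
      (hasSum_sphericalTheta_pow hA.posDef hτ l ((a : ℝ) • x))
      (K := formGaussSum A b d / d ^ k * phase (realForm A) (a * b) x * j ^ k)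
      (q := -Complex.I * (N * c) * j / (4 * π) * (l ⬝ᵥ (realForm A)⁻¹.map ofReal *ᵥ l)) (j := j)
      (fun s => by
        rw [hA.periodization_gaussian_Gamma0 hk hx hdet hτ hτ' hj hττ', smul_smul, mulVec_smul,
          smul_dotProduct, dotProduct_smul, smul_eq_mul, smul_eq_mul]
        ring_nf)
      (hl.imp_right fun hl => by rw [hl, mul_zero])
    have hν : (ν.factorial : ℂ) ≠ 0 := by exact_mod_cast ν.factorial_ne_zero
    rw [← mul_div_assoc, div_left_inj' hν] at hcoeff
    rw [hcoeff, pow_add]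
    ring
  | zero => simp [sphericalTheta, periodization]
  | add p q hp' hq' hp hq =>
    rw [sphericalTheta_add hA.posDef hτ' hp' hq', sphericalTheta_add hA.posDef hτ hp' hq', hp, hq,
      mul_add]
  | smul r p _ hp => rw [sphericalTheta_smul, sphericalTheta_smul, hp, mul_left_comm]

end SphericalTheta

section ThetaTransforms

variable {ι : Type*} [Fintype ι] {A : Matrix ι ι ℤ} {p : (ι → ℝ) → ℂ} {w : ℕ} {γ γ' : SL(2, ℤ)}
  {ε ε' : ℂ}

/-- The theta series with weight function `p` of all cosets of the dual lattice obey the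
transformation law of weight `w` and multiplier `ε` under `γ`. -/
def ThetaTransforms (A : Matrix ι ι ℤ) (p : (ι → ℝ) → ℂ) (w : ℕ) (γ : SL(2, ℤ)) (ε : ℂ) : Prop :=
  ∀ x : ι → ℝ, IsDualVector A x → ∀ τ : ℍ,
    sphericalTheta (realForm A) p (γ • τ : ℍ) x =
      ε * phase (realForm A) (γ 0 0 * γ 0 1) x * (γ 1 0 * τ + γ 1 1) ^ w *
        sphericalTheta (realForm A) p τ ((γ 0 0 : ℝ) • x)

lemma exists_eq_level_mul_of_mem_Gamma0 {N : ℕ} (hγ : γ ∈ Gamma0 N) : ∃ c : ℤ, γ 1 0 = N * c :=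
  (ZMod.intCast_zmod_eq_zero_iff_dvd _ _).mp (Gamma0_mem.mp hγ)

lemma det_eq_one (γ : SL(2, ℤ)) : γ 0 0 * γ 1 1 - γ 0 1 * γ 1 0 = 1 := by
  rw [← Matrix.det_fin_two]
  exact γ.det_coe

lemma coe_smul_mul_denom (γ : SL(2, ℤ)) (τ : ℍ) :
    ((γ • τ : ℍ) : ℂ) * (γ 1 0 * τ + γ 1 1) = γ 0 0 * τ + γ 0 1 := by
  rw [coe_specialLinearGroup_apply]
  exact div_mul_cancel₀ _ (UpperHalfPlane.denom_ne_zero γ τ)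

lemma specialLinearGroup_mul_apply (γ γ' : SL(2, ℤ)) (i j : Fin 2) :
    (γ * γ') i j = γ i 0 * γ' 0 j + γ i 1 * γ' 1 j := by
  simp [Matrix.mul_apply, Fin.sum_univ_two]

lemma denom_mul (γ γ' : SL(2, ℤ)) (τ : ℍ) :
    ((γ * γ') 1 0 * τ + (γ * γ') 1 1 : ℂ) =
      (γ 1 0 * (γ' • τ : ℍ) + γ 1 1) * (γ' 1 0 * τ + γ' 1 1) := by
  rw [add_mul, mul_assoc, coe_smul_mul_denom, specialLinearGroup_mul_apply,
    specialLinearGroup_mul_apply]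
  push_cast
  ring

namespace IsEvenOfLevel

variable [DecidableEq ι] {N : ℕ} (hA : IsEvenOfLevel A N)

include hA

theorem thetaTransforms_of_eq_natCast {k ν : ℕ} (hk : Fintype.card ι = 2 * k)
    (hp : p ∈ sphericalFunctions (realForm A) ν) (hγ : γ ∈ Gamma0 N) {d : ℕ} [NeZero d]
    (hd : γ 1 1 = d) : ThetaTransforms A p (k + ν) γ (formGaussSum A (γ 0 1) d / d ^ k) := by
  intro x hx τ
  obtain ⟨c, hc⟩ := exists_eq_level_mul_of_mem_Gamma0 hγ
  have hdet : γ 0 0 * d - γ 0 1 * (N * c) = 1 := by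
    rw [← hc, ← hd]
    exact det_eq_one γ
  refine hA.sphericalTheta_Gamma0 hk hp hx hdet τ.im_pos (γ • τ).im_pos ?_ (coe_smul_mul_denom γ τ)
  rw [hc, hd]
  push_cast
  rfl

lemma phase_specialLinearGroup_mul (hγ' : γ' ∈ Gamma0 N) {x : ι → ℝ} (hx : IsDualVector A x) :
    phase (realForm A) ((γ * γ') 0 0 * (γ * γ') 0 1) x =
      phase (realForm A) (γ 0 0 * γ 0 1) x *
        phase (realForm A) (γ' 0 0 * γ' 0 1) ((γ 0 0 : ℝ) • x) := by
  obtain ⟨c, hc⟩ := exists_eq_level_mul_of_mem_Gamma0 hγ'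
  have hdet : (γ' 0 0 * γ' 1 1 - γ' 0 1 * (N * c) : ℂ) = 1 := by
    have := det_eq_one γ'
    rw [hc] at this
    exact_mod_cast this
  rw [phase_smul, ← phase_add_left, ← mul_one (phase _ (_ + _) x),
    ← hA.phase_level_mul hx (c * (2 * γ 0 0 * γ 0 1 * γ' 0 1 + γ 0 1 ^ 2 * γ' 1 1)),
    ← phase_add_left]
  congr 1
  rw [specialLinearGroup_mul_apply, specialLinearGroup_mul_apply, hc]
  push_cast
  linear_combination (γ 0 0 * γ 0 1 : ℂ) * hdet

lemma sphericalTheta_specialLinearGroup_mul (hγ' : γ' ∈ Gamma0 N) (τ : ℂ) {x : ι → ℝ}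
    (hx : IsDualVector A x) :
    sphericalTheta (realForm A) p τ (((γ * γ') 0 0 : ℝ) • x) =
      sphericalTheta (realForm A) p τ ((γ' 0 0 : ℝ) • (γ 0 0 : ℝ) • x) := by
  obtain ⟨c, hc⟩ := exists_eq_level_mul_of_mem_Gamma0 hγ'
  obtain ⟨z, hz⟩ := hA.exists_natCast_smul_eq hx
  have hshift : (((γ * γ') 0 0 : ℝ) • x) =
      (γ' 0 0 : ℝ) • (γ 0 0 : ℝ) • x + Int.cast ∘ ((γ 0 1 * c) • z) := by
    funext i
    have hzi : N * x i = z i := congrFun hz i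
    rw [specialLinearGroup_mul_apply, hc]
    simp only [Pi.add_apply, Pi.smul_apply, Function.comp_apply, smul_eq_mul]
    push_cast
    linear_combination (γ 0 1 * c : ℝ) * hzi
  rw [hshift, sphericalTheta, periodization_add_intCast, sphericalTheta]

end IsEvenOfLevel

theorem ThetaTransforms.mul [DecidableEq ι] {N : ℕ} (hA : IsEvenOfLevel A N)
    (hγ' : γ' ∈ Gamma0 N) (h : ThetaTransforms A p w γ ε) (h' : ThetaTransforms A p w γ' ε') :
    ThetaTransforms A p w (γ * γ') (ε * ε') := by
  intro x hx τ
  rw [SemigroupAction.mul_smul, h x hx, h' _ (hx.intCast_smul _),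
    hA.phase_specialLinearGroup_mul hγ' hx, denom_mul, mul_pow,
    hA.sphericalTheta_specialLinearGroup_mul hγ' τ hx]
  ring

end ThetaTransforms

section ResidueClass

/-- The parametrization `m ↦ h + N m` of the residue class of `h` modulo `N`. -/
def residueClassEquiv {ι : Type*} {N : ℕ} (hN : 0 < N) (h : ι → ℤ) :
    (ι → ℤ) ≃ {x : ι → ℤ // ∀ i, (N : ℤ) ∣ x i - h i} where
  toFun m := ⟨fun i => h i + N * m i, fun i => by simp⟩
  invFun x := fun i => (x.1 i - h i) / N
  left_inv m := by
    funext i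
    simp [hN.ne']
  right_inv x := by
    ext i
    simp [Int.mul_ediv_cancel' (x.2 i)]

lemma intCast_residueClassEquiv {ι : Type*} {N : ℕ} (hN : 0 < N) (h m : ι → ℤ) :
    (Int.cast ∘ (residueClassEquiv hN h m : ι → ℤ) : ι → ℝ) =
      (N : ℝ) • ((N : ℝ)⁻¹ • (Int.cast ∘ h) + Int.cast ∘ m) := by
  have hN' : (N : ℝ) ≠ 0 := by exact_mod_cast hN.ne'
  rw [smul_add, smul_inv_smul₀ hN']
  funext i
  simp [residueClassEquiv]

lemma isDualVector_inv_smul {ι : Type*} [Fintype ι] {A : Matrix ι ι ℤ} {N : ℕ} (hN : 0 < N)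
    {h : ι → ℤ} (hh : ∀ i, (N : ℤ) ∣ (A *ᵥ h) i) :
    IsDualVector A ((N : ℝ)⁻¹ • (Int.cast ∘ h)) := by
  have hN' : (N : ℝ) ≠ 0 := by exact_mod_cast hN.ne'
  choose u hu using hh
  refine ⟨u, ?_⟩
  rw [mulVec_smul, realForm_mulVec_intCast]
  funext i
  simp [hu, hN']

lemma phase_inv_smul_intCast {ι : Type*} [Fintype ι] (A : Matrix ι ι ℤ) (N : ℕ) (t : ℂ)
    (h : ι → ℤ) :
    phase (realForm A) t ((N : ℝ)⁻¹ • (Int.cast ∘ h)) =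
      cexp (2 * π * Complex.I * (t * (h ⬝ᵥ A *ᵥ h : ℤ)) / (2 * N ^ 2)) := by
  rw [phase_smul, phase, realForm_mulVec_intCast, dotProduct_intCast]
  congr 1
  push_cast
  ring

lemma intCast_smul_inv_smul {ι : Type*} (N : ℕ) (a : ℤ) (h : ι → ℤ) :
    (a : ℝ) • (N : ℝ)⁻¹ • (Int.cast ∘ h : ι → ℝ) =
      (N : ℝ)⁻¹ • (Int.cast ∘ fun i => a * h i) := by
  rw [smul_comm]
  congr 1
  funext i
  simp

variable {n : ℕ} {A : Matrix (Fin n) (Fin n) ℤ} {P : (Fin n → ℤ) → ℂ} {ν N : ℕ}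

lemma sphericalLin_eq_dotProduct (A : Matrix (Fin n) (Fin n) ℤ) (l : Fin n → ℂ) (x : Fin n → ℤ) :
    sphericalLin A l x = (l ᵥ* A.map Int.cast) ⬝ᵥ (ofReal ∘ (Int.cast ∘ x : Fin n → ℝ)) := by
  rw [← dotProduct_mulVec]
  simp [sphericalLin, dotProduct, mulVec, Finset.mul_sum, mul_assoc]

lemma dotProduct_inv_mulVec_vecMul (hsymm : A.IsSymm) (hdet : IsUnit (realForm A).det)
    (l : Fin n → ℂ) :
    (l ᵥ* A.map Int.cast) ⬝ᵥ (realForm A)⁻¹.map ofReal *ᵥ (l ᵥ* A.map Int.cast) =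
      ∑ i, ∑ j, l i * (A i j : ℂ) * l j := by
  have hinv : (realForm A)⁻¹.map ofReal * A.map Int.cast = (1 : Matrix (Fin n) (Fin n) ℂ) := by
    have hmap : A.map Int.cast = (realForm A).map ofReal := by
      ext
      simp
    rw [hmap, ← map_one ofRealHom.mapMatrix, ← nonsing_inv_mul _ hdet]
    exact (map_mul ofRealHom.mapMatrix _ _).symm
  have hcomm : l ᵥ* A.map Int.cast = A.map Int.cast *ᵥ l := by
    rw [← vecMul_transpose, (hsymm.map _).eq]
  nth_rw 2 [hcomm]
  rw [mulVec_mulVec, hinv, one_mulVec, ← dotProduct_mulVec]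
  simp [dotProduct, mulVec, Finset.mul_sum, mul_assoc]

lemma IsSpherical.exists_mem_sphericalFunctions (hP : IsSpherical A ν P) (hsymm : A.IsSymm)
    (hdet : IsUnit (realForm A).det) :
    ∃ p ∈ sphericalFunctions (realForm A) ν, ∀ x : Fin n → ℤ, P x = p (Int.cast ∘ x) := by
  have hmem (l : Fin n → ℂ) (hl : ν ≤ 1 ∨ ∑ i, ∑ j, l i * (A i j : ℂ) * l j = 0) :
      (fun v => ((l ᵥ* A.map Int.cast) ⬝ᵥ (ofReal ∘ v)) ^ ν) ∈
        sphericalFunctions (realForm A) ν :=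
    Submodule.subset_span
      ⟨_, by rwa [dotProduct_inv_mulVec_vecMul hsymm hdet], rfl⟩
  rcases hP with ⟨rfl, c, rfl⟩ | ⟨rfl, l, rfl⟩ | ⟨-, m, c, l, hl, rfl⟩
  · exact ⟨_, Submodule.smul_mem _ c (hmem 0 (.inl zero_le_one)), by simp⟩
  · exact ⟨_, hmem l (.inl le_rfl), by simp [sphericalLin_eq_dotProduct]⟩
  · exact ⟨_, Submodule.sum_mem _ (t := .univ) fun t _ =>
        Submodule.smul_mem _ (c t) (hmem (l t) (.inr (hl t))),
      by simp [sphericalLin_eq_dotProduct]⟩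

lemma tsum_residueClass_eq_sphericalTheta (hN : 0 < N) {p : (Fin n → ℝ) → ℂ}
    (hp : p ∈ sphericalFunctions (realForm A) ν) (h : Fin n → ℤ) (τ : ℂ) :
    ∑' x : {x : Fin n → ℤ // ∀ i, (N : ℤ) ∣ (x i - h i)}, p (Int.cast ∘ (x : Fin n → ℤ)) *
        cexp (2 * (π : ℂ) * Complex.I * (((x : Fin n → ℤ) ⬝ᵥ A *ᵥ (x : Fin n → ℤ) : ℤ) : ℂ) * τ /
          (2 * (N : ℂ) ^ 2)) =
      N ^ ν * sphericalTheta (realForm A) p τ ((N : ℝ)⁻¹ • (Int.cast ∘ h)) := by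
  have hN' : (N : ℂ) ≠ 0 := by exact_mod_cast hN.ne'
  rw [← (residueClassEquiv hN h).tsum_eq, sphericalTheta, periodization, ← tsum_mul_left]
  refine tsum_congr fun m => ?_
  have hform : (((residueClassEquiv hN h m : Fin n → ℤ) ⬝ᵥ
      A *ᵥ (residueClassEquiv hN h m : Fin n → ℤ) : ℤ) : ℝ) = _ :=
    (dotProduct_intCast _ _).symm
  rw [← realForm_mulVec_intCast, intCast_residueClassEquiv, dotProduct_mulVec_smul_self] at hform
  rw [← ofReal_intCast, hform, intCast_residueClassEquiv, apply_smul_of_mem_sphericalFunctions hp,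
    Pi.mul_apply, phase, ofReal_natCast, mul_assoc]
  congr 3
  push_cast
  field_simp

end ResidueClass

section FiniteField

theorem exists_transpose_mul_mul_eq_diagonal {ι K : Type*} [Fintype ι] [DecidableEq ι] [Field K]
    (h2 : (2 : K) ≠ 0) {M : Matrix ι ι K} (hM : M.IsSymm) :
    ∃ (C : Matrix ι ι K) (w : ι → K), IsUnit C ∧ Cᵀ * M * C = diagonal w := by
  have := invertibleOfNonzero h2
  obtain ⟨v', hv'⟩ := LinearMap.BilinForm.exists_orthogonal_basis (B := toBilin' M)
    (LinearMap.BilinForm.isSymm_iff.mp (isSymm_toBilin'_iff_isSymm.mpr hM))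
  let e : Fin (Module.finrank K (ι → K)) ≃ ι := Fintype.equivOfCardEq (by simp)
  let v := v'.reindex e
  refine ⟨(Pi.basisFun K ι).toMatrix v, fun i => toBilin' M (v i) (v i),
    @isUnit_of_invertible _ _ _ ((Pi.basisFun K ι).invertibleToMatrix v), ?_⟩
  have h := LinearMap.BilinForm.toMatrix_mul_basis_toMatrix (Pi.basisFun K ι) v (toBilin' M)
  rw [LinearMap.BilinForm.toMatrix_basisFun, LinearMap.BilinForm.toMatrix'_toBilin'] at h
  rw [h]
  ext i j
  rw [LinearMap.BilinForm.toMatrix_apply, diagonal_apply]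
  split_ifs with hij
  · rw [hij]
  · simpa [v, Function.onFun] using hv' (i := e.symm i) (j := e.symm j) (by simpa using hij)

variable {F R : Type*} [Field F] [Fintype F] [DecidableEq F] [CommRing R]

/-- The quadratic character of a finite field with values in `R`. -/
def quadraticMulChar (F R : Type*) [Field F] [Fintype F] [DecidableEq F] [CommRing R] :
    MulChar F R :=
  (quadraticChar F).ringHomComp (Int.castRingHom R)

lemma quadraticMulChar_sq {a : F} (ha : a ≠ 0) : quadraticMulChar F R (a ^ 2) = 1 := by
  simp [quadraticMulChar, quadraticChar_sq_one' ha]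

lemma quadraticMulChar_intCast (p : ℕ) [Fact p.Prime] (a : ℤ) :
    quadraticMulChar (ZMod p) R a = jacobiSym a p := by
  rw [← jacobiSym.legendreSym.to_jacobiSym]
  rfl

variable [IsDomain R] {ψ : AddChar F R}

theorem sum_addChar_mul_sq (hF : ringChar F ≠ 2) (hψ : ψ.IsPrimitive) {w : F} (hw : w ≠ 0) :
    ∑ x, ψ (w * x ^ 2) = quadraticMulChar F R w * gaussSum (quadraticMulChar F R) ψ := by
  have hcard (t : F) : (Finset.card {x : F | x ^ 2 = t} : R) = quadraticMulChar F R t + 1 := by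
    have h := quadraticChar_card_sqrts hF t
    rw [Set.toFinset_ofPred] at h
    simpa [quadraticMulChar] using congrArg (Int.cast : ℤ → R) h
  have hfiber : ∑ x, ψ (w * x ^ 2) = ∑ t, (quadraticMulChar F R t + 1) * ψ (w * t) := by
    rw [← Finset.sum_fiberwise Finset.univ (fun x : F => x ^ 2)]
    refine Finset.sum_congr rfl fun t _ => ?_
    rw [← hcard, ← nsmul_eq_mul, ← Finset.sum_const]
    exact Finset.sum_congr rfl fun x hx => by rw [(Finset.mem_filter.mp hx).2]
  have horth : ∑ t, ψ (w * t) = 0 := by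
    simpa using AddChar.sum_eq_zero_of_ne_one (hψ hw)
  have hshift := gaussSum_mulShift (quadraticMulChar F R) ψ (Units.mk0 w hw)
  rw [Units.val_mk0] at hshift
  rw [hfiber, ← hshift, ← mul_assoc, ← map_mul, ← sq, quadraticMulChar_sq hw, one_mul]
  simp_rw [add_mul, Finset.sum_add_distrib, one_mul, horth, add_zero]
  simp [gaussSum]

variable {ι : Type*} [Fintype ι] [DecidableEq ι]

theorem sum_addChar_diagonal (hF : ringChar F ≠ 2) (hψ : ψ.IsPrimitive) {w : ι → F}
    (hw : ∀ i, w i ≠ 0) :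
    ∑ y : ι → F, ψ (y ⬝ᵥ diagonal w *ᵥ y) =
      quadraticMulChar F R (∏ i, w i) * gaussSum (quadraticMulChar F R) ψ ^ Fintype.card ι := by
  have hterm (y : ι → F) : ψ (y ⬝ᵥ diagonal w *ᵥ y) = ∏ i, ψ (w i * y i ^ 2) := by
    have hform : y ⬝ᵥ diagonal w *ᵥ y = ∑ i, w i * y i ^ 2 := by
      simp only [dotProduct, mulVec_diagonal]
      exact Finset.sum_congr rfl fun i _ => by ring
    rw [hform]
    exact map_prod ψ.toMonoidHom (fun i => Multiplicative.ofAdd (w i * y i ^ 2)) Finset.univ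
  simp_rw [hterm, ← Fintype.prod_sum (fun i x => ψ (w i * x ^ 2)),
    fun i => sum_addChar_mul_sq hF hψ (hw i), Finset.prod_mul_distrib, map_prod,
    Finset.prod_const, Finset.card_univ]

theorem sum_addChar_dotProduct_mulVec (hF : ringChar F ≠ 2) (hψ : ψ.IsPrimitive)
    {M : Matrix ι ι F} (hM : M.IsSymm) (hdet : M.det ≠ 0) :
    ∑ x : ι → F, ψ (x ⬝ᵥ M *ᵥ x) =
      quadraticMulChar F R M.det * gaussSum (quadraticMulChar F R) ψ ^ Fintype.card ι := by
  obtain ⟨C, w, hC, hw⟩ := exists_transpose_mul_mul_eq_diagonal (Ring.two_ne_zero hF) hM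
  have hC₀ : C.det ≠ 0 := ((isUnit_iff_isUnit_det C).mp hC).ne_zero
  have hprod : ∏ i, w i = C.det ^ 2 * M.det := by
    rw [← det_diagonal, ← hw, det_mul, det_mul, det_transpose]
    ring
  have hw₀ : ∏ i, w i ≠ 0 := hprod ▸ mul_ne_zero (pow_ne_zero _ hC₀) hdet
  have hbij : Function.Bijective C.mulVec :=
    ⟨mulVec_injective_iff_isUnit.mpr hC, mulVec_surjective_iff_isUnit.mpr hC⟩
  have hform (y : ι → F) : C *ᵥ y ⬝ᵥ M *ᵥ (C *ᵥ y) = y ⬝ᵥ diagonal w *ᵥ y := by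
    rw [← hw, dotProduct_mulVec, vecMul_mulVec, ← dotProduct_mulVec, mulVec_mulVec]
  rw [← hbij.sum_comp fun x => ψ (x ⬝ᵥ M *ᵥ x)]
  simp_rw [hform]
  rw [sum_addChar_diagonal hF hψ fun i => Finset.prod_ne_zero_iff.mp hw₀ i (Finset.mem_univ i),
    hprod, map_mul, quadraticMulChar_sq hC₀, one_mul]

theorem sum_addChar_dotProduct_mulVec_of_card_eq [CharZero R] (hF : ringChar F ≠ 2)
    (hψ : ψ.IsPrimitive) {k : ℕ} (hk : Fintype.card ι = 2 * k) {M : Matrix ι ι F} (hM : M.IsSymm)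
    (hdet : M.det ≠ 0) :
    ∑ x : ι → F, ψ (x ⬝ᵥ M *ᵥ x) =
      quadraticMulChar F R ((-1) ^ k * M.det) * (Fintype.card F : R) ^ k := by
  have hne : quadraticMulChar F R ≠ 1 :=
    (MulChar.ringHomComp_ne_one_iff (RingHom.injective_int _)).mpr (quadraticChar_ne_one hF)
  have hquad : (quadraticMulChar F R).IsQuadratic := (quadraticChar_isQuadratic F).comp _
  rw [sum_addChar_dotProduct_mulVec hF hψ hM hdet, hk, pow_mul, gaussSum_sq hne hquad hψ, mul_pow,
    map_mul, map_pow]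
  ring

end FiniteField

section PrimeModulus

variable {ι : Type*} [Fintype ι] [DecidableEq ι] {A : Matrix ι ι ℤ} {N : ℕ}

namespace IsEvenOfLevel

variable (hA : IsEvenOfLevel A N)

include hA

lemma isCoprime_det {d : ℤ} (hd : IsCoprime d (N : ℤ)) (k : ℕ) :
    IsCoprime d ((-1) ^ k * A.det) := by
  obtain ⟨B, -, hAB⟩ := hA.exists_mul_eq
  have hdet : A.det * B.det = (N : ℤ) ^ Fintype.card ι := by
    rw [← det_mul, hAB, det_smul, det_one, mul_one]
  exact isCoprime_one_right.neg_right.pow_right.mul_right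
    (hdet ▸ hd.pow_right (n := Fintype.card ι)).of_mul_right_left

variable {p : ℕ} [Fact p.Prime]

lemma phase_div_prime (hp : p ≠ 2) (b : ℤ) (r : ι → ZMod p) :
    phase (realForm A) (b / p) (Int.cast ∘ (ZMod.cast ∘ r : ι → ℤ)) =
      ZMod.stdAddChar (r ⬝ᵥ ((b / 2 : ZMod p) • A.map Int.cast) *ᵥ r) := by
  have h2 : (2 : ZMod p) ≠ 0 := Ring.two_ne_zero ((ZMod.ringChar_zmod_n p).substr hp)
  set y : ι → ℤ := ZMod.cast ∘ r with hy
  obtain ⟨m, hm⟩ := even_dotProduct_mulVec_self hA.isSymm hA.even_diag y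
  have hr : r = Int.cast ∘ y := by
    funext i
    simp [hy]
  have hform : r ⬝ᵥ ((b / 2 : ZMod p) • A.map Int.cast) *ᵥ r = (b * m : ℤ) := by
    have hcast : (Int.cast ∘ y) ⬝ᵥ A.map Int.cast *ᵥ (Int.cast ∘ y) = ((m + m : ℤ) : ZMod p) := by
      rw [← hm]
      exact (map_dotProduct_mulVec (Int.castRingHom (ZMod p)) A y y).symm
    rw [smul_mulVec, dotProduct_smul, hr, hcast, smul_eq_mul]
    push_cast
    field_simp
    ring
  rw [hform, ZMod.stdAddChar_coe, phase, realForm_mulVec_intCast, dotProduct_intCast, hm]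
  push_cast
  ring_nf

theorem formGaussSum_prime {k : ℕ} (hk : Fintype.card ι = 2 * k) (hp : p ≠ 2) {b : ℤ}
    (hb : (b : ZMod p) ≠ 0) (hdet : (A.det : ZMod p) ≠ 0) :
    formGaussSum A b p = jacobiSym ((-1) ^ k * A.det) p * p ^ k := by
  have hF : ringChar (ZMod p) ≠ 2 := (ZMod.ringChar_zmod_n p).substr hp
  have hb' : (b / 2 : ZMod p) ^ k ≠ 0 := pow_ne_zero _ (div_ne_zero hb (Ring.two_ne_zero hF))
  have hMdet : ((b / 2 : ZMod p) • A.map Int.cast).det = ((b / 2 : ZMod p) ^ k) ^ 2 * A.det := by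
    rw [det_smul, hk, Int.cast_det, pow_mul']
  rw [formGaussSum, Fintype.sum_congr _ _ (hA.phase_div_prime hp b),
    sum_addChar_dotProduct_mulVec_of_card_eq hF (ZMod.isPrimitive_stdAddChar p) hk
      ((hA.isSymm.map _).smul _) (hMdet ▸ mul_ne_zero (pow_ne_zero _ hb') hdet),
    hMdet, mul_left_comm, map_mul, quadraticMulChar_sq hb', one_mul, ZMod.card,
    ← quadraticMulChar_intCast]
  push_cast
  rfl

end IsEvenOfLevel

lemma formGaussSum_one (A : Matrix ι ι ℤ) (b : ℤ) : formGaussSum A b 1 = 1 := by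
  have hzero (r : ι → ZMod 1) : (Int.cast ∘ (ZMod.cast ∘ r : ι → ℤ) : ι → ℝ) = 0 := by
    funext i
    simp [Subsingleton.elim (r i) 0]
  simp [formGaussSum, hzero, phase]

end PrimeModulus

section Kronecker

variable {D d : ℤ}

lemma kronecker_of_odd (hd : Odd d) (D : ℤ) :
    kronecker D d = (if d < 0 ∧ D < 0 then -1 else 1) * jacobiSym D d.natAbs := by
  have hd₀ : d ≠ 0 := by
    rintro rfl
    simp at hd
  have hval : padicValNat 2 d.natAbs = 0 :=
    padicValNat.eq_zero_of_not_dvd (Int.natAbs_odd.mpr hd).not_two_dvd_nat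
  simp [_root_.kronecker, hd₀, hval]

lemma jacobiSym_congr_right {a : ℤ} {b b' : ℕ} (hb : Odd b) (hb' : Odd b')
    (h : 4 * a ∣ b - b') : jacobiSym a b = jacobiSym a b' := by
  have hmod : b' ≡ b [MOD 4 * a.natAbs] := by
    rw [← Int.natCast_modEq_iff, Int.modEq_iff_dvd]
    simpa [Int.natAbs_mul] using Int.natAbs_dvd.mpr h
  rw [jacobiSym.mod_right a hb, jacobiSym.mod_right a hb', hmod]

lemma jacobiSym_natCast_four_mul_sub_one {a : ℕ} (ha : 0 < a) :
    jacobiSym a (4 * a - 1) = 1 := by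
  have hodd : Odd (4 * a - 1) := ⟨2 * a - 1, by lia⟩
  have hmul : jacobiSym (4 * a) (4 * a - 1) = 1 := by
    rw [jacobiSym.mod_left' (a₂ := 1) (b := 4 * a - 1), jacobiSym.one_left]
    push_cast [show 1 ≤ 4 * a by lia]
    exact (Int.modEq_iff_dvd.mpr dvd_rfl).symm
  rwa [jacobiSym.mul_left, jacobiSym.at_four hodd, one_mul] at hmul

lemma jacobiSym_four_mul_natAbs_sub_one (hD : D ≠ 0) :
    jacobiSym D (4 * D.natAbs - 1) = if D < 0 then -1 else 1 := by
  have hpos : 0 < D.natAbs := Int.natAbs_pos.mpr hD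
  have hodd : Odd (4 * D.natAbs - 1) := ⟨2 * D.natAbs - 1, by lia⟩
  have habs := jacobiSym_natCast_four_mul_sub_one hpos
  split_ifs with hneg
  · have hD' : D = -1 * (D.natAbs : ℤ) := by lia
    rw [hD', jacobiSym.mul_left, ← hD', habs, mul_one, jacobiSym.at_neg_one hodd]
    exact ZMod.χ₄_nat_three_mod_four (by lia)
  · have hD' : D = (D.natAbs : ℤ) := by lia
    rw [← habs, ← hD']

-- For `d < 0`, the positive integer `|d| (4 |D| - 1)` is congruent to `d` modulo `4 D`.
theorem jacobiSym_eq_kronecker {m : ℕ} (hD : D ≠ 0) (hd : Odd d) (hmd : 4 * D ∣ m - d) :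
    jacobiSym D m = kronecker D d := by
  have hm : Odd m := by
    obtain ⟨t, ht⟩ := hmd
    rw [← Int.odd_coe_nat, show (m : ℤ) = d + 2 * (2 * D * t) by lia]
    exact hd.add_even (even_two_mul _)
  have hdabs := Int.natAbs_odd.mpr hd
  rw [kronecker_of_odd hd]
  rcases lt_or_ge d 0 with hneg | hnonneg
  · have hodd : Odd (4 * D.natAbs - 1) := ⟨2 * D.natAbs - 1, by lia⟩
    have hrep : ((d.natAbs * (4 * D.natAbs - 1) : ℕ) : ℤ) =
        d + 4 * (D.natAbs : ℤ) * d.natAbs := by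
      rw [Nat.cast_mul, Nat.cast_sub (by lia)]
      push_cast
      rw [abs_of_neg hneg]
      ring
    have hdvd : 4 * D ∣ m - (d.natAbs * (4 * D.natAbs - 1) : ℕ) := by
      rw [hrep, ← sub_sub]
      exact dvd_sub hmd (((mul_dvd_mul_left 4 (Int.dvd_natAbs_self)).mul_right _))
    rw [jacobiSym_congr_right hm (hdabs.mul hodd) hdvd,
      jacobiSym.mul_right' _ hdabs.pos.ne' hodd.pos.ne', jacobiSym_four_mul_natAbs_sub_one hD,
      mul_comm]
    simp only [hneg, true_and]
  · rw [if_neg (by lia), one_mul]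
    exact jacobiSym_congr_right hm hdabs (by rwa [Int.natAbs_of_nonneg hnonneg])

lemma jacobiSym_eq_jacobiSym_natAbs (hD : D % 4 = 1) {m : ℕ} (hm : Odd m) :
    jacobiSym D m = jacobiSym m D.natAbs := by
  rcases lt_or_ge D 0 with hneg | hnonneg
  · have hD' : D = -1 * (D.natAbs : ℤ) := by lia
    have hD₃ : D.natAbs % 4 = 3 := by lia
    rw [hD', jacobiSym.mul_left, ← hD', jacobiSym.at_neg_one hm]
    rcases Nat.odd_mod_four_iff.mp (Nat.odd_iff.mp hm) with hm₁ | hm₃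
    · rw [ZMod.χ₄_nat_one_mod_four hm₁, one_mul,
        jacobiSym.quadratic_reciprocity_one_mod_four hm₁ (Nat.odd_iff.mpr (by lia))]
    · rw [ZMod.χ₄_nat_three_mod_four hm₃,
        jacobiSym.quadratic_reciprocity_three_mod_four hm₃ hD₃, neg_one_mul]
  · have hD' : D = (D.natAbs : ℤ) := by lia
    rw [hD', jacobiSym.quadratic_reciprocity_one_mod_four (by lia) hm, ← hD']

lemma kronTwo_eq_jacobiSym (hD : Odd D) : kronTwo D = jacobiSym 2 D.natAbs := by
  rw [jacobiSym.at_two (Int.natAbs_odd.mpr hD), ZMod.χ₈_nat_eq_if_mod_eight, kronTwo]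
  have := Int.odd_iff.mp hD
  grind

lemma jacobiSym_natAbs_eq_sign_mul (hD : D % 4 = 1) (d : ℤ) :
    jacobiSym d D.natAbs = (if d < 0 ∧ D < 0 then -1 else 1) * jacobiSym d.natAbs D.natAbs := by
  rcases lt_or_ge d 0 with hneg | hnonneg
  · have hd' : d = -1 * (d.natAbs : ℤ) := by lia
    conv_lhs => rw [hd', jacobiSym.mul_left,
      jacobiSym.at_neg_one (Int.natAbs_odd.mpr (Int.odd_iff.mpr (by lia)))]
    congr 1
    split_ifs with hsign
    · exact ZMod.χ₄_nat_three_mod_four (by lia)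
    · exact ZMod.χ₄_nat_one_mod_four (by lia)
  · rw [if_neg (by lia), one_mul, Int.natAbs_of_nonneg hnonneg]

theorem kronecker_eq_jacobiSym_natAbs (hD : D % 4 = 1) (d : ℤ) :
    kronecker D d = jacobiSym d D.natAbs := by
  rcases eq_or_ne d 0 with rfl | hd
  · rw [_root_.kronecker, if_pos rfl]
    split_ifs with hunit
    · obtain rfl : D = 1 := by lia
      simp
    · rw [jacobiSym.zero_left (by lia)]
  · obtain ⟨e, m, hm, hem⟩ := Nat.exists_eq_two_pow_mul_odd (Int.natAbs_ne_zero.mpr hd)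
    have hval : padicValNat 2 d.natAbs = e := by
      rw [hem, padicValNat.mul (by positivity) hm.pos.ne', padicValNat.prime_pow,
        padicValNat.eq_zero_of_not_dvd hm.not_two_dvd_nat, add_zero]
    rw [_root_.kronecker, if_neg hd, jacobiSym_natAbs_eq_sign_mul hD, hval, hem,
      Nat.mul_div_cancel_left _ (by positivity), jacobiSym_eq_jacobiSym_natAbs hD hm,
      kronTwo_eq_jacobiSym (Int.odd_iff.mpr (by lia)), mul_assoc, ← jacobiSym.pow_left,
      ← jacobiSym.mul_left]
    push_cast
    rfl

lemma jacobiSym_eq_neg_one_of_mod_four {m : ℕ} (hD : D % 4 = 3) (hm : m % 4 = 3)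
    (hmD : D ∣ m - 1) : jacobiSym D m = -1 := by
  have habs : jacobiSym m D.natAbs = 1 := by
    rw [jacobiSym.mod_left' (a₂ := 1), jacobiSym.one_left]
    exact (Int.modEq_iff_dvd.mpr (Int.natAbs_dvd.mpr hmD)).symm
  have hodd : Odd m := Nat.odd_iff.mpr (by lia)
  rcases lt_or_ge D 0 with hneg | hnonneg
  · have hD' : D = -1 * (D.natAbs : ℤ) := by lia
    rw [hD', jacobiSym.mul_left, jacobiSym.at_neg_one hodd, ZMod.χ₄_nat_three_mod_four hm,
      jacobiSym.quadratic_reciprocity_one_mod_four (by lia) hodd, habs, mul_one]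
  · have hD' : D = (D.natAbs : ℤ) := by lia
    rw [hD', jacobiSym.quadratic_reciprocity_three_mod_four (by lia) hm, habs]

lemma kronecker_eq_neg_one_of_mod_four (hD : D % 4 = 3) {N : ℕ} (hN : Odd N) :
    kronecker D (N * (2 * D.natAbs) + 1 : ℕ) = -1 := by
  have hm : (N * (2 * D.natAbs) + 1) % 4 = 3 := by
    obtain ⟨s, hs⟩ := hN.mul (Int.natAbs_odd.mpr (Int.odd_iff.mpr (by lia : D % 2 = 1)))
    rw [mul_left_comm, hs]
    lia
  have hdvd : D ∣ (N * (2 * D.natAbs) + 1 : ℕ) - 1 := by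
    refine ((Int.dvd_natAbs_self (a := D)).mul_left (N * 2)).trans (dvd_of_eq ?_)
    push_cast
    ring
  rw [kronecker_of_odd (by exact_mod_cast Nat.odd_iff.mpr (by lia)), if_neg (by lia), one_mul,
    Int.natAbs_natCast, jacobiSym_eq_neg_one_of_mod_four hD hm hdvd]

end Kronecker

section Multiplier

/-- The matrix `(1 0; Nx 1) (1 y; 0 1)` of `Γ₀(N)`. -/
def shear (N : ℕ) (x y : ℤ) : SL(2, ℤ) := ⟨!![1, y; N * x, N * x * y + 1], by simp [mul_comm]⟩

lemma shear_mem_Gamma0 (N : ℕ) (x y : ℤ) : shear N x y ∈ Gamma0 N := by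
  rw [Gamma0_mem]
  simp [shear]

lemma mul_shear_apply_one_one (γ : SL(2, ℤ)) (N : ℕ) (x y : ℤ) :
    (γ * shear N x y) 1 1 = (γ 1 0 + γ 1 1 * (N * x)) * y + γ 1 1 := by
  rw [specialLinearGroup_mul_apply]
  simp only [shear, Matrix.SpecialLinearGroup.coe_mk, of_apply, cons_val', cons_val_zero,
    cons_val_one, cons_val_fin_one]
  ring

variable {N : ℕ} {γ : SL(2, ℤ)}

lemma isCoprime_lower_right (hγ : γ ∈ Gamma0 N) : IsCoprime (γ 1 1) (N : ℤ) := by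
  obtain ⟨c, hc⟩ := exists_eq_level_mul_of_mem_Gamma0 hγ
  refine ⟨γ 0 0, -(γ 0 1 * c), ?_⟩
  linear_combination det_eq_one γ + γ 0 1 * hc

lemma exists_add_mul_eq_mul_ne_zero {d m : ℤ} (h : IsCoprime d m) (hd : d ≠ 0) (c : ℤ) :
    ∃ x t, c + d * x = m * t ∧ t ≠ 0 := by
  obtain ⟨u, v, huv⟩ := h
  rcases eq_or_ne (c * v) 0 with hcv | hcv
  · exact ⟨m - c * u, d, by linear_combination -c * huv + m * hcv, hd⟩
  · exact ⟨-(c * u), c * v, by linear_combination -c * huv, hcv⟩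

lemma exists_prime_mul_shear (hN : 0 < N) {D : ℤ} (hD : D ≠ 0) (hγ : γ ∈ Gamma0 N)
    (hcop : IsCoprime (γ 1 1) (4 * D)) (hd : γ 1 1 ≠ 0) :
    ∃ (x y : ℤ) (p : ℕ), p.Prime ∧ (γ * shear N x y) 1 1 = p ∧ 4 * D ∣ p - γ 1 1 := by
  obtain ⟨c, hc⟩ := exists_eq_level_mul_of_mem_Gamma0 hγ
  obtain ⟨x, t, hxt, ht⟩ := exists_add_mul_eq_mul_ne_zero hcop hd c
  have hentry : γ 1 0 + γ 1 1 * (N * x) = 4 * D * (N * t) := by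
    linear_combination hc + N * hxt
  have hmod : 4 * D * (N * t) ≠ 0 := by
    have : (N : ℤ) ≠ 0 := by exact_mod_cast hN.ne'
    positivity
  have hcop' : IsCoprime (γ 1 1) (4 * D * (N * t)) := by
    rw [← hentry]
    exact IsCoprime.add_mul_left_right ⟨γ 0 0, -γ 0 1, by linear_combination det_eq_one γ⟩ _
  obtain ⟨p, -, hp, hpd⟩ := Nat.forall_exists_prime_gt_and_zmodEq 0 (Int.natAbs_ne_zero.mpr hmod)
    (by rwa [Int.natCast_natAbs, IsCoprime.abs_right_iff])
  obtain ⟨y, hy⟩ : 4 * D * (N * t) ∣ p - γ 1 1 := Int.natAbs_dvd.mp hpd.symm.dvd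
  refine ⟨x, y, p, hp, ?_, hy ▸ (dvd_mul_right _ _).mul_right _⟩
  rw [mul_shear_apply_one_one, hentry]
  linear_combination -hy

variable {ι : Type*} [Fintype ι] {A : Matrix ι ι ℤ} {p : (ι → ℝ) → ℂ} {w : ℕ} {ε ε' : ℂ}

lemma sphericalTheta_one_I_ne_zero {Q : Matrix ι ι ℝ} (hQ : Q.PosDef) :
    sphericalTheta Q 1 Complex.I 0 ≠ 0 := by
  classical
  have hterm (v : ι → ℝ) :
      (1 * phase Q Complex.I) v = (Real.exp (-(π * (v ⬝ᵥ Q *ᵥ v))) : ℝ) := by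
    rw [one_mul, phase, ofReal_exp]
    congr 1
    push_cast
    linear_combination (π * (v ⬝ᵥ Q *ᵥ v : ℝ) : ℂ) * Complex.I_mul_I
  have hsum := (hasExpDecay_mul_phase hQ (τ := Complex.I) (by simp)
    (one_mem_sphericalFunctions Q)).summable_add_intCast 0
  simp only [hterm] at hsum
  rw [sphericalTheta, periodization]
  simp only [hterm, ← ofReal_tsum]
  exact ofReal_ne_zero.mpr ((Complex.summable_ofReal.mp hsum).tsum_pos
    (fun m => (Real.exp_pos _).le) 0 (Real.exp_pos _)).ne'

lemma ThetaTransforms.unique (h : ThetaTransforms A p w γ ε) (h' : ThetaTransforms A p w γ ε')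
    {τ : ℍ} (hτ : sphericalTheta (realForm A) p τ 0 ≠ 0) : ε = ε' := by
  have heq := (h 0 (isDualVector_zero A) τ).symm.trans (h' 0 (isDualVector_zero A) τ)
  rw [smul_zero] at heq
  exact mul_right_cancel₀ (Complex.exp_ne_zero _)
    (mul_right_cancel₀ (pow_ne_zero _ (UpperHalfPlane.denom_ne_zero γ τ))
      (mul_right_cancel₀ hτ heq))

namespace IsEvenOfLevel

variable [DecidableEq ι] (hA : IsEvenOfLevel A N) {k ν : ℕ} (hk : Fintype.card ι = 2 * k)

include hA hk

lemma thetaTransforms_one (hp : p ∈ sphericalFunctions (realForm A) ν) (hγ : γ ∈ Gamma0 N)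
    (hd : γ 1 1 = 1) : ThetaTransforms A p (k + ν) γ 1 := by
  simpa [formGaussSum_one] using
    hA.thetaTransforms_of_eq_natCast hk hp hγ (d := 1) (by simpa using hd)

lemma thetaTransforms_of_mul_shear (hp : p ∈ sphericalFunctions (realForm A) ν) {x y : ℤ}
    (h : ThetaTransforms A p (k + ν) (γ * shear N x y) ε) : ThetaTransforms A p (k + ν) γ ε := by
  have hinv : (shear N x y)⁻¹ ∈ Gamma0 N := inv_mem (shear_mem_Gamma0 N x y)
  have hlower : (shear N x y)⁻¹ 1 1 = 1 := by
    rw [Matrix.SpecialLinearGroup.coe_inv, adjugate_fin_two]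
    simp [shear]
  simpa only [mul_inv_cancel_right, mul_one] using
    h.mul hA hinv (hA.thetaTransforms_one hk hp hinv hlower)

theorem thetaTransforms_of_prime (hp : p ∈ sphericalFunctions (realForm A) ν) (hγ : γ ∈ Gamma0 N)
    {q : ℕ} [hq : Fact q.Prime] (hq2 : q ≠ 2) (hd : γ 1 1 = q) :
    ThetaTransforms A p (k + ν) γ (jacobiSym ((-1) ^ k * A.det) q) := by
  have hb : (γ 0 1 : ZMod q) ≠ 0 := fun hzero => by
    have := congrArg (Int.cast : ℤ → ZMod q) (det_eq_one γ)
    simp [hd, hzero] at this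
  have hdet : (A.det : ZMod q) ≠ 0 := by
    have hcop := hA.isCoprime_det (isCoprime_lower_right hγ) 0
    rw [hd, pow_zero, one_mul] at hcop
    rw [Ne, ZMod.intCast_zmod_eq_zero_iff_dvd]
    exact fun hdvd =>
      (Nat.prime_iff_prime_int.mp hq.out).not_isUnit (hcop.isUnit_of_dvd' dvd_rfl hdvd)
  have hqk : (q : ℂ) ^ k ≠ 0 := pow_ne_zero _ (by exact_mod_cast hq.out.ne_zero)
  have h := hA.thetaTransforms_of_eq_natCast hk hp hγ hd
  rwa [hA.formGaussSum_prime hk hq2 hb hdet, mul_div_cancel_right₀ _ hqk] at h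

theorem thetaTransforms_of_odd (hp : p ∈ sphericalFunctions (realForm A) ν) (hγ : γ ∈ Gamma0 N)
    (hd : Odd (γ 1 1)) :
    ThetaTransforms A p (k + ν) γ (kronecker ((-1) ^ k * A.det) (γ 1 1)) := by
  have hD : (-1) ^ k * A.det ≠ 0 :=
    mul_ne_zero (pow_ne_zero _ (by simp)) (det_ne_zero_of_pos hA.pos)
  have hcop : IsCoprime (γ 1 1) (2 ^ 2 * ((-1) ^ k * A.det)) :=
    (Int.isCoprime_two_right.mpr hd).pow_right.mul_right
      (hA.isCoprime_det (isCoprime_lower_right hγ) k)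
  have hd₀ : γ 1 1 ≠ 0 := fun hzero => by simp [hzero] at hd
  obtain ⟨x, y, q, hq, hentry, hqd⟩ := exists_prime_mul_shear hA.level_pos hD hγ hcop hd₀
  have hq2 : q ≠ 2 := by
    rintro rfl
    obtain ⟨t, ht⟩ := hqd
    obtain ⟨s, hs⟩ := hd
    push_cast at ht
    lia
  have := Fact.mk hq
  rw [← jacobiSym_eq_kronecker hD hd hqd]
  exact hA.thetaTransforms_of_mul_shear hk hp (hA.thetaTransforms_of_prime hk hp
    (mul_mem hγ (shear_mem_Gamma0 N x y)) hq2 hentry)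

-- If `D ≡ 3` modulo `4`, then the shear with lower right entry `2 N |D| + 1` would have both
-- multipliers `1` and `-1`.
theorem discriminant_mod_four_of_odd (hN : Odd N) : ((-1) ^ k * A.det) % 4 = 1 := by
  set D := (-1) ^ k * A.det
  have hD : Odd D := Int.isCoprime_two_left.mp
    (hA.isCoprime_det (Int.isCoprime_two_left.mpr (by exact_mod_cast hN)) k)
  by_contra hD₁
  have hD₃ : D % 4 = 3 := by
    obtain ⟨s, hs⟩ := hD
    lia
  have hone := one_mem_sphericalFunctions (realForm A)
  set γ := shear N (2 * D.natAbs) 1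
  have hd : γ 1 1 = (N * (2 * D.natAbs) + 1 : ℕ) := by simp [γ, shear]
  have hpos : ThetaTransforms A 1 (k + 0) γ 1 :=
    hA.thetaTransforms_of_mul_shear hk hone (x := 0) (y := -1) <|
      hA.thetaTransforms_one hk hone
        (mul_mem (shear_mem_Gamma0 _ _ _) (shear_mem_Gamma0 _ _ _)) <| by
        rw [mul_shear_apply_one_one]
        simp [γ, shear]
  have hneg := hA.thetaTransforms_of_odd hk hone (γ := γ) (shear_mem_Gamma0 _ _ _)
    (by rw [hd, Int.odd_coe_nat]; exact ⟨N * D.natAbs, by ring⟩)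
  rw [hd, kronecker_eq_neg_one_of_mod_four hD₃ hN] at hneg
  have := hpos.unique hneg (τ := UpperHalfPlane.I) (sphericalTheta_one_I_ne_zero hA.posDef)
  norm_num at this

theorem thetaTransforms_kronecker (hp : p ∈ sphericalFunctions (realForm A) ν)
    (hγ : γ ∈ Gamma0 N) :
    ThetaTransforms A p (k + ν) γ (kronecker ((-1) ^ k * A.det) (γ 1 1)) := by
  rcases Int.even_or_odd (γ 1 1) with hd | hd
  swap
  · exact hA.thetaTransforms_of_odd hk hp hγ hd
  have hcop := isCoprime_lower_right hγ
  have hN : Odd N := by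
    have := Int.isCoprime_two_left.mp (hcop.of_isCoprime_of_dvd_left hd.two_dvd)
    exact_mod_cast this
  have hD := hA.discriminant_mod_four_of_odd hk hN
  obtain ⟨c, hc⟩ := exists_eq_level_mul_of_mem_Gamma0 hγ
  obtain ⟨u, v, huv⟩ := hA.isCoprime_det hcop k
  set D := (-1) ^ k * A.det
  have hentry : (γ * shear N (-(c * u)) 1) 1 1 = γ 1 1 + D * (N * c * v) := by
    rw [mul_shear_apply_one_one, hc]
    linear_combination -(N * c : ℤ) * huv
  have hodd : Odd ((γ * shear N (-(c * u)) 1) 1 1) := by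
    have hlower : Odd (γ 0 1 * γ 1 0) := by
      rw [show γ 0 1 * γ 1 0 = γ 0 0 * γ 1 1 - 1 by linarith [det_eq_one γ]]
      exact (hd.mul_left _).sub_odd odd_one
    rw [mul_shear_apply_one_one, mul_one]
    exact ((Int.odd_mul.mp hlower).2.add_even (hd.mul_right _)).add_even hd
  have hkron : kronecker D (γ 1 1 + D * (N * c * v)) = kronecker D (γ 1 1) := by
    rw [kronecker_eq_jacobiSym_natAbs hD, kronecker_eq_jacobiSym_natAbs hD]
    refine jacobiSym.mod_left' (Int.modEq_iff_dvd.mpr (Int.natAbs_dvd.mpr ?_)).symm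
    exact ⟨N * c * v, by ring⟩
  rw [← hkron, ← hentry]
  exact hA.thetaTransforms_of_mul_shear hk hp
    (hA.thetaTransforms_of_odd hk hp (mul_mem hγ (shear_mem_Gamma0 _ _ _)) hodd)

end IsEvenOfLevel

end Multiplier

theorem theta_transformation_Gamma0_general (n : ℕ) (hne : Even n)
    (A : Matrix (Fin n) (Fin n) ℤ) (hsymm : A.IsSymm) (heven : ∀ i, 2 ∣ A i i)
    (hpos : ∀ x : Fin n → ℤ, x ≠ 0 → 0 < x ⬝ᵥ A.mulVec x)
    (D : ℤ) (hD : D = (-1) ^ (n / 2) * A.det)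
    (N : ℕ) (hN : 0 < N)
    (hlevel : ∃ B : Matrix (Fin n) (Fin n) ℤ, (∀ i, 2 ∣ B i i) ∧
        (N : ℚ) • (A.map (Int.cast : ℤ → ℚ))⁻¹ = B.map (Int.cast : ℤ → ℚ))
    (ν : ℕ) (P : (Fin n → ℤ) → ℂ) (hP : IsSpherical A ν P)
    (h : Fin n → ℤ) (hh : ∀ i, (N : ℤ) ∣ A.mulVec h i)
    (θ : (Fin n → ℤ) → ℍ → ℂ)
    (hθ : ∀ (h' : Fin n → ℤ) (τ : ℍ), θ h' τ =
        ∑' x : {x : Fin n → ℤ // ∀ i, (N : ℤ) ∣ (x i - h' i)},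
          P x * Complex.exp (2 * (Real.pi : ℂ) * Complex.I *
            (((x : Fin n → ℤ) ⬝ᵥ A.mulVec (x : Fin n → ℤ) : ℤ) : ℂ) * (τ : ℂ) /
              (2 * (N : ℂ) ^ 2))) :
    ∀ γ ∈ Gamma0 N, ∀ τ : ℍ,
      θ h (γ • τ) = (kronecker D (γ 1 1) : ℂ) *
        Complex.exp (2 * (Real.pi : ℂ) * Complex.I *
          ((γ 0 0 : ℂ) * (γ 0 1 : ℂ) * ((h ⬝ᵥ A.mulVec h : ℤ) : ℂ)) / (2 * (N : ℂ) ^ 2)) *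
        ((γ 1 0 : ℂ) * (τ : ℂ) + (γ 1 1 : ℂ)) ^ (n / 2 + ν) *
        θ (fun i => γ 0 0 * h i) τ := by
  intro γ hγ τ
  obtain ⟨B, hB, hinv⟩ := hlevel
  have hA : IsEvenOfLevel A N := ⟨hsymm, heven, hpos, hN, B, hB,
    mul_eq_smul_one_of_smul_inv_eq (det_ne_zero_of_pos hpos) hinv⟩
  have hcard : Fintype.card (Fin n) = 2 * (n / 2) := by
    rw [Fintype.card_fin, Nat.two_mul_div_two_of_even hne]
  obtain ⟨p, hp, hPp⟩ := hP.exists_mem_sphericalFunctions hsymm hA.isUnit_det_realForm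
  have hseries (h' : Fin n → ℤ) (τ : ℍ) :
      θ h' τ = N ^ ν * sphericalTheta (realForm A) p τ ((N : ℝ)⁻¹ • (Int.cast ∘ h')) := by
    simp only [hθ, hPp]
    exact tsum_residueClass_eq_sphericalTheta hN hp h' τ
  rw [hseries, hseries, hA.thetaTransforms_kronecker hcard hp hγ _ (isDualVector_inv_smul hN hh) τ,
    phase_inv_smul_intCast, intCast_smul_inv_smul, hD]
  ring

/-- **Proposition 3** (theta transformation under `Γ₀(N)`).  With `A` an even positive-definite
symmetric integer matrix of even size `n`, `D = (-1)^(n/2) det A`, `N` the level of `A`, `P` a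
spherical function of degree `ν`, and `h ∈ ℤⁿ` with `A h ≡ 0 (mod N)`, the theta function
`θ(τ; h) = ∑_{x ≡ h (mod N)} P(x) e(ᵗx A x · τ / 2N²)` satisfies, for `γ = (a b; c d) ∈ Γ₀(N)`,
`θ(γτ; h) = (D/d) e(ab ᵗh A h / 2N²) (cτ+d)^{n/2+ν} θ(τ; a·h)`. -/
theorem theta_transformation_Gamma0 (n : ℕ) (hn : 0 < n) (hne : Even n)
    (A : Matrix (Fin n) (Fin n) ℤ) (hsymm : A.IsSymm) (heven : ∀ i, 2 ∣ A i i)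
    (hpos : ∀ x : Fin n → ℤ, x ≠ 0 → 0 < x ⬝ᵥ A.mulVec x)
    (D : ℤ) (hD : D = (-1) ^ (n / 2) * A.det)
    (N : ℕ)
    (hN : IsLeast {N' : ℕ | 0 < N' ∧ ∃ B : Matrix (Fin n) (Fin n) ℤ, (∀ i, 2 ∣ B i i) ∧
        (N' : ℚ) • (A.map (Int.cast : ℤ → ℚ))⁻¹ = B.map (Int.cast : ℤ → ℚ)} N)
    (ν : ℕ) (P : (Fin n → ℤ) → ℂ) (hP : IsSpherical A ν P)
    (h : Fin n → ℤ) (hh : ∀ i, (N : ℤ) ∣ A.mulVec h i)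
    (θ : (Fin n → ℤ) → ℍ → ℂ)
    (hθ : ∀ (h' : Fin n → ℤ) (τ : ℍ), θ h' τ =
        ∑' x : {x : Fin n → ℤ // ∀ i, (N : ℤ) ∣ (x i - h' i)},
          P x * Complex.exp (2 * (Real.pi : ℂ) * Complex.I *
            (((x : Fin n → ℤ) ⬝ᵥ A.mulVec (x : Fin n → ℤ) : ℤ) : ℂ) * (τ : ℂ) /
              (2 * (N : ℂ) ^ 2))) :
    ∀ γ ∈ Gamma0 N, ∀ τ : ℍ,
      θ h (γ • τ) = (kronecker D ((γ : Matrix (Fin 2) (Fin 2) ℤ) 1 1) : ℂ) *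
        Complex.exp (2 * (Real.pi : ℂ) * Complex.I *
          (((γ : Matrix (Fin 2) (Fin 2) ℤ) 0 0 : ℂ) * ((γ : Matrix (Fin 2) (Fin 2) ℤ) 0 1 : ℂ) *
            ((h ⬝ᵥ A.mulVec h : ℤ) : ℂ)) / (2 * (N : ℂ) ^ 2)) *
        (((γ : Matrix (Fin 2) (Fin 2) ℤ) 1 0 : ℂ) * (τ : ℂ) +
            ((γ : Matrix (Fin 2) (Fin 2) ℤ) 1 1 : ℂ)) ^ (n / 2 + ν) *
        θ (fun i => (γ : Matrix (Fin 2) (Fin 2) ℤ) 0 0 * h i) τ :=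
  theta_transformation_Gamma0_general n hne A hsymm heven hpos D hD N hN.1.1 hN.1.2 ν P hP h hh θ hθ
end

section
/- For every positive integer n, the number of pairs (x, y) ∈ ℤ² with x² + y² = n, x ≡ 1 (mod 2), and y ≡ 0 (mod 2) equals 2 ∑_{d|n} χ₋₄(d) − 2 ∑_{d|(n/2)} χ₋₄(d). -/
open Finset

/-- The Kronecker symbol `(-4/d)` for positive `d`. -/
def chiM4 (d : ℕ) : ℤ := if d % 4 = 1 then 1 else if d % 4 = 3 then -1 else 0

/-- `Sdiv χ n k = ∑_{d ∣ n/k} χ d`, interpreted as `0` when `k` does not divide `n`. -/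
def Sdiv (χ : ℕ → ℤ) (n k : ℕ) : ℤ := if k ∣ n then ∑ d ∈ (n / k).divisors, χ d else 0

/-!
Points `(x, y)` on the circle `x ^ 2 + y ^ 2 = n` are Gaussian integers `z = x + y i` of norm `n`.
Multiplication by a Gaussian integer `w` of norm `k` identifies the elements of norm `n / k` with
the elements of norm `n` divisible by `w`. Together with the factorisation of a rational prime in
`ℤ[i]`, this shows that the number `r n` of elements of norm `n` satisfies the recursion
`r (p m) = (1 + χ₄ p) r m - χ₄ p r (m / p)`, which determines a function up to a scalar and is also
satisfied by `n ↦ ∑ d ∣ n, χ₄ d`; this is Jacobi's two-square theorem.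

The elements of norm `n` divisible by `1 + i` are those with `x ≡ y (mod 2)`, and there are
`r (n / 2)` of them. The swap of `x` and `y` permutes the others, so half of these
`r n - r (n / 2)` elements have `x` odd and `y` even.
-/

theorem sum_divisors_filter_dvd {M : Type*} [AddCommMonoid M] (f : ℕ → M) {k : ℕ} (hk : 0 < k)
    (n : ℕ) :
    ∑ d ∈ n.divisors with k ∣ d, f d =
      if k ∣ n then ∑ d ∈ (n / k).divisors, f (k * d) else 0 := by
  split_ifs with h
  · obtain ⟨m, rfl⟩ := h
    rw [Nat.mul_div_cancel_left m hk]
    have himage : {d ∈ (k * m).divisors | k ∣ d} = m.divisors.image (k * ·) := by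
      ext d
      simp only [mem_filter, Nat.mem_divisors, mem_image]
      constructor
      · rintro ⟨⟨hd, hm⟩, e, rfl⟩
        exact ⟨e, ⟨Nat.dvd_of_mul_dvd_mul_left hk hd, right_ne_zero_of_mul hm⟩, rfl⟩
      · rintro ⟨e, ⟨he, hm⟩, rfl⟩
        exact ⟨⟨Nat.mul_dvd_mul_left k he, mul_ne_zero hk.ne' hm⟩, dvd_mul_right k e⟩
    rw [himage, sum_image fun a _ b _ hab => Nat.eq_of_mul_eq_mul_left hk hab]
  · refine sum_eq_zero fun d hd => absurd ?_ h
    rw [mem_filter] at hd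
    exact hd.2.trans (Nat.dvd_of_mem_divisors hd.1)

theorem divisors_prime_mul_filter_not_dvd {p m : ℕ} (hp : p.Prime) :
    {d ∈ (p * m).divisors | ¬p ∣ d} = {d ∈ m.divisors | ¬p ∣ d} := by
  ext d
  simp only [mem_filter, Nat.mem_divisors, mul_ne_zero_iff, hp.ne_zero, ne_eq, not_false_eq_true,
    true_and, and_congr_left_iff]
  intro hpd _
  exact ((hp.coprime_iff_not_dvd.2 hpd).symm).dvd_mul_left

section HeckeRecursion

variable {R : Type*} [CommRing R]

/-- The recursion `f (p m) = (1 + χ p) f m - χ p f (m / p)` for all primes `p`, in which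
`f (m / p)` is read as `0` when `p ∤ m`. It characterises the coefficients of the Dirichlet series
with Euler factors `((1 - p⁻ˢ) (1 - χ p p⁻ˢ))⁻¹`, up to a scalar. -/
def HeckeRecursion (χ f : ℕ → R) : Prop :=
  ∀ p m : ℕ, p.Prime →
    f (p * m) = (1 + χ p) * f m - χ p * if p ∣ m then f (m / p) else 0

theorem heckeRecursion_sum_divisors (χ : ℕ →* R) :
    HeckeRecursion χ fun n => ∑ d ∈ n.divisors, χ d := by
  intro p m hp
  have hsplit (n : ℕ) := sum_filter_add_sum_filter_not n.divisors (p ∣ ·) (χ ·)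
  have hdvd (n : ℕ) : ∑ d ∈ n.divisors with p ∣ d, χ d =
      χ p * if p ∣ n then ∑ d ∈ (n / p).divisors, χ d else 0 := by
    simp only [sum_divisors_filter_dvd _ hp.pos, map_mul, mul_sum, mul_ite, mul_zero]
  have hpm := hsplit (p * m)
  rw [hdvd, if_pos (dvd_mul_right p m), Nat.mul_div_cancel_left m hp.pos,
    divisors_prime_mul_filter_not_dvd hp] at hpm
  have hm := hsplit m
  rw [hdvd] at hm
  linear_combination hm - hpm

theorem HeckeRecursion.eq_mul {χ f g : ℕ → R} (hf : HeckeRecursion χ f)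
    (hg : HeckeRecursion χ g) (hg1 : g 1 = 1) {n : ℕ} (hn : n ≠ 0) : f n = f 1 * g n := by
  induction n using Nat.strong_induction_on with
  | _ n ih =>
  by_cases h1 : n = 1
  · rw [h1, hg1, mul_one]
  obtain ⟨p, hp, m, rfl⟩ := Nat.exists_prime_and_dvd h1
  have hm : m ≠ 0 := right_ne_zero_of_mul hn
  have hlt : m < p * m := lt_mul_left (Nat.pos_of_ne_zero hm) hp.one_lt
  have hdiv : (if p ∣ m then f (m / p) else 0) = f 1 * if p ∣ m then g (m / p) else 0 := by
    split_ifs with h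
    · exact ih _ ((Nat.div_le_self m p).trans_lt hlt) (Nat.div_ne_zero_iff_of_dvd h |>.2
        ⟨hm, hp.ne_zero⟩)
    · rw [mul_zero]
  rw [hf p m hp, hg p m hp, ih m hlt hm, hdiv]
  ring

end HeckeRecursion

theorem prime_of_prime_norm {z : GaussianInt} (hz : Prime z.norm) : Prime z := by
  have : IsLocalHom (Zsqrtd.normMonoidHom (d := -1)) :=
    ⟨fun w hw => (Zsqrtd.isUnit_iff_norm_isUnit w).2 hw⟩
  exact (Irreducible.of_map (f := Zsqrtd.normMonoidHom) hz.irreducible).prime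

theorem isCoprime_star_of_isCoprime_norm {d : ℤ} {z : ℤ√d} (h : IsCoprime z.norm (2 * z.re)) :
    IsCoprime z (star z) := by
  obtain ⟨u, v, huv⟩ := h
  have htrace : z + star z = (2 * z.re : ℤ) := by
    ext <;> simp [two_mul]
  refine ⟨u * star z + v, v, ?_⟩
  calc (u * star z + v) * z + v * star z = u * (z * star z) + v * (z + star z) := by ring
    _ = ((u * z.norm + v * (2 * z.re) : ℤ) : ℤ√d) := by
      rw [← Zsqrtd.norm_eq_mul_conj, htrace]; push_cast; rfl
    _ = 1 := by rw [huv, Int.cast_one]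

theorem isCoprime_star_of_norm_eq_odd_prime {z : GaussianInt} {p : ℕ} (hp : p.Prime)
    (hodd : p ≠ 2) (hz : z.norm = p) : IsCoprime z (star z) := by
  have hsq : z.re ^ 2 + z.im ^ 2 = p := by
    rw [← hz, Zsqrtd.norm_def]; ring
  have hcoprime : IsCoprime z.im z.re := by
    refine isCoprime_of_dvd _ _ ?_ fun e he _ him hre => he ?_
    · rintro ⟨him, hre⟩
      rw [him, hre] at hsq
      exact hp.ne_zero (by exact_mod_cast hsq.symm)
    · have hsquarefree : Squarefree (p : ℤ) := (Nat.prime_iff_prime_int.1 hp).squarefree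
      refine hsquarefree e ?_
      rw [← hsq, ← pow_two]
      exact dvd_add (pow_dvd_pow_of_dvd hre 2) (pow_dvd_pow_of_dvd him 2)
  have htwo : IsCoprime (p : ℤ) 2 :=
    Nat.isCoprime_iff_coprime.2 ((Nat.coprime_primes hp Nat.prime_two).2 hodd)
  refine isCoprime_star_of_isCoprime_norm ?_
  rw [hz]
  exact htwo.mul_right (hsq ▸ Int.isCoprime_of_sq_sum hcoprime)

theorem norm_one_add_I : (⟨1, 1⟩ : GaussianInt).norm = (2 : ℕ) := by
  norm_num [Zsqrtd.norm_def]

theorem one_add_I_dvd_iff {z : GaussianInt} : (⟨1, 1⟩ : GaussianInt) ∣ z ↔ Even (z.re + z.im) := by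
  rw [even_iff_two_dvd]
  constructor
  · rintro ⟨u, rfl⟩
    exact ⟨u.re, by simp only [Zsqrtd.re_mul, Zsqrtd.im_mul]; ring⟩
  · rintro ⟨s, hs⟩
    refine ⟨⟨s, z.im - s⟩, Zsqrtd.ext ?_ ?_⟩
    · simp only [Zsqrtd.re_mul]; linarith
    · simp only [Zsqrtd.im_mul]; ring

/-- The Gaussian integers of norm `n`, that is, the integer points of the circle
`x ^ 2 + y ^ 2 = n`. -/
def normFiber (n : ℕ) : Set GaussianInt := {z | z.norm = n}

theorem mem_normFiber_iff_sq_add_sq {n : ℕ} {z : GaussianInt} :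
    z ∈ normFiber n ↔ z.re ^ 2 + z.im ^ 2 = n := by
  rw [normFiber, Set.mem_ofPred_eq, Zsqrtd.norm_def]
  ring_nf

theorem finite_normFiber (n : ℕ) : (normFiber n).Finite := by
  have hinj : Function.Injective fun z : GaussianInt => (z.re, z.im) := fun z w h =>
    Zsqrtd.ext (congrArg Prod.fst h) (congrArg Prod.snd h)
  refine (((Set.finite_Icc (-(n : ℤ)) n).prod (Set.finite_Icc (-(n : ℤ)) n)).preimage
    hinj.injOn).subset fun z hz => ?_
  rw [mem_normFiber_iff_sq_add_sq] at hz
  simp only [Set.mem_preimage, Set.mem_prod, Set.mem_Icc]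
  refine ⟨⟨?_, ?_⟩, ?_, ?_⟩ <;> nlinarith [sq_nonneg z.re, sq_nonneg z.im]

theorem normFiber_one : normFiber 1 = {⟨1, 0⟩, ⟨-1, 0⟩, ⟨0, 1⟩, ⟨0, -1⟩} := by
  ext ⟨x, y⟩
  simp only [mem_normFiber_iff_sq_add_sq, Set.mem_insert_iff, Set.mem_singleton_iff,
    Zsqrtd.mk.injEq, Nat.cast_one]
  constructor
  · intro h
    have hx : |x| ≤ 1 := abs_le_one_iff_mul_self_le_one.2 (by nlinarith [sq_nonneg y])
    have hy : |y| ≤ 1 := abs_le_one_iff_mul_self_le_one.2 (by nlinarith [sq_nonneg x])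
    obtain ⟨hx₁, hx₂⟩ := abs_le.1 hx
    obtain ⟨hy₁, hy₂⟩ := abs_le.1 hy
    interval_cases x <;> interval_cases y <;> simp_all
  · rintro (⟨rfl, rfl⟩ | ⟨rfl, rfl⟩ | ⟨rfl, rfl⟩ | ⟨rfl, rfl⟩) <;> norm_num

theorem ncard_normFiber_one : (normFiber 1).ncard = 4 := by
  rw [normFiber_one, Set.ncard_eq_toFinset_card']
  rfl

theorem normFiber_mul_sep_dvd {w : GaussianInt} {k : ℕ} (hw : w.norm = k) (hk : k ≠ 0) (n : ℕ) :
    {z ∈ normFiber (k * n) | w ∣ z} = (w * ·) '' normFiber n := by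
  have hk' : (k : ℤ) ≠ 0 := Nat.cast_ne_zero.2 hk
  have hnorm (u : GaussianInt) : w * u ∈ normFiber (k * n) ↔ u ∈ normFiber n := by
    simp only [normFiber, Set.mem_ofPred_eq, Zsqrtd.norm_mul, hw, Nat.cast_mul]
    exact mul_right_inj' hk'
  ext z
  constructor
  · rintro ⟨hz, u, rfl⟩
    exact ⟨u, (hnorm u).1 hz, rfl⟩
  · rintro ⟨u, hu, rfl⟩
    exact ⟨(hnorm u).2 hu, dvd_mul_right w u⟩

theorem ncard_normFiber_sep_dvd {w : GaussianInt} {k : ℕ} (hw : w.norm = k) (hk : k ≠ 0)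
    (n : ℕ) :
    {z ∈ normFiber n | w ∣ z}.ncard = if k ∣ n then (normFiber (n / k)).ncard else 0 := by
  have hw0 : w ≠ 0 := by
    rintro rfl
    rw [Zsqrtd.norm_zero] at hw
    exact hk (by exact_mod_cast hw.symm)
  split_ifs with h
  · obtain ⟨m, rfl⟩ := h
    rw [normFiber_mul_sep_dvd hw hk, Nat.mul_div_cancel_left m (Nat.pos_of_ne_zero hk),
      Set.ncard_image_of_injective _ (mul_right_injective₀ hw0)]
  · rw [Set.ncard_eq_zero ((finite_normFiber n).subset (Set.sep_subset _ _)),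
      Set.sep_eq_empty_iff_mem_false]
    rintro _ hz ⟨u, rfl⟩
    rw [normFiber, Set.mem_ofPred_eq, Zsqrtd.norm_mul, hw] at hz
    exact h (Int.natCast_dvd_natCast.1 (hz ▸ dvd_mul_right _ _))

theorem ncard_normFiber_mul_sep_dvd {w : GaussianInt} {k : ℕ} (hw : w.norm = k) (hk : k ≠ 0)
    (n : ℕ) : {z ∈ normFiber (k * n) | w ∣ z}.ncard = (normFiber n).ncard := by
  rw [ncard_normFiber_sep_dvd hw hk, if_pos (dvd_mul_right k n),
    Nat.mul_div_cancel_left n (Nat.pos_of_ne_zero hk)]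

theorem ncard_normFiber_mul_sep_natCast_dvd {k : ℕ} (hk : k ≠ 0) (n : ℕ) :
    {z ∈ normFiber (k * n) | (k : GaussianInt) ∣ z}.ncard =
      if k ∣ n then (normFiber (n / k)).ncard else 0 := by
  have hnorm : (k : GaussianInt).norm = (k * k : ℕ) := by
    rw [Zsqrtd.norm_natCast, Nat.cast_mul]
  have hk_pos := Nat.pos_of_ne_zero hk
  rw [ncard_normFiber_sep_dvd hnorm (mul_ne_zero hk hk), Nat.mul_div_mul_left n k hk_pos]
  simp only [Nat.mul_dvd_mul_iff_left hk_pos]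

theorem dvd_or_star_dvd_of_mem_normFiber {p m : ℕ} {w z : GaussianInt} (hw : Prime w)
    (hwp : w ∣ (p : GaussianInt)) (hz : z ∈ normFiber (p * m)) : w ∣ z ∨ star w ∣ z := by
  have hnorm : z * star z = p * m := by
    rw [← Zsqrtd.norm_eq_mul_conj, hz.out]
    push_cast
    rfl
  refine (hw.dvd_or_dvd (hnorm ▸ hwp.mul_right _)).imp_right fun h => ?_
  simpa only [starRingEnd_apply, star_star] using map_dvd (starRingEnd GaussianInt) h

section PrimeFactorisation

variable {p : ℕ} (m : ℕ)

theorem ncard_normFiber_two_mul : (normFiber (2 * m)).ncard = (normFiber m).ncard := by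
  have hstar : (⟨1, 1⟩ : GaussianInt) ∣ star ⟨1, 1⟩ := by simp [one_add_I_dvd_iff]
  rw [← ncard_normFiber_mul_sep_dvd norm_one_add_I two_ne_zero m, eq_comm,
    Set.sep_eq_self_iff_mem_true.2]
  intro z hz
  refine (dvd_or_star_dvd_of_mem_normFiber ?_ ?_ hz).elim id hstar.trans
  · exact prime_of_prime_norm (norm_one_add_I ▸ Nat.prime_iff_prime_int.1 Nat.prime_two)
  · simp [one_add_I_dvd_iff]

theorem ncard_normFiber_prime_mul_of_mod_four_eq_three (hp : p.Prime) (h3 : p % 4 = 3) :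
    (normFiber (p * m)).ncard = if p ∣ m then (normFiber (m / p)).ncard else 0 := by
  have := Fact.mk hp
  rw [← ncard_normFiber_mul_sep_natCast_dvd hp.ne_zero m, eq_comm, Set.sep_eq_self_iff_mem_true.2]
  intro z hz
  have h := dvd_or_star_dvd_of_mem_normFiber
    (GaussianInt.prime_of_nat_prime_of_mod_four_eq_three p h3) dvd_rfl hz
  rwa [star_natCast, or_self] at h

theorem ncard_normFiber_prime_mul_of_mod_four_eq_one (hp : p.Prime) (h1 : p % 4 = 1) :
    (normFiber (p * m)).ncard + (if p ∣ m then (normFiber (m / p)).ncard else 0) =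
      2 * (normFiber m).ncard := by
  have := Fact.mk hp
  obtain ⟨a, b, hab⟩ := Nat.Prime.sq_add_sq (p := p) (by omega)
  set w : GaussianInt := ⟨a, b⟩
  have hw : w.norm = p := by
    rw [Zsqrtd.norm_def, ← hab]; push_cast; ring
  have hw_star : (star w).norm = p := by rw [Zsqrtd.norm_conj, hw]
  have hw_prime : Prime w := prime_of_prime_norm (hw ▸ Nat.prime_iff_prime_int.1 hp)
  have hw_mul : w * star w = p := by
    rw [← Zsqrtd.norm_eq_mul_conj, hw, Int.cast_natCast]
  have hcoprime : IsCoprime w (star w) :=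
    isCoprime_star_of_norm_eq_odd_prime hp (by omega) hw
  set A := {z ∈ normFiber (p * m) | w ∣ z} with hA
  set B := {z ∈ normFiber (p * m) | star w ∣ z} with hB
  have hunion : A ∪ B = normFiber (p * m) := by
    rw [hA, hB, ← Set.sep_or, Set.sep_eq_self_iff_mem_true]
    exact fun z hz => dvd_or_star_dvd_of_mem_normFiber hw_prime (hw_mul ▸ dvd_mul_right _ _) hz
  have hinter : A ∩ B = {z ∈ normFiber (p * m) | (p : GaussianInt) ∣ z} := by
    rw [hA, hB, ← Set.sep_and, ← hw_mul]
    congr! 3 with z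
    exact ⟨fun h => hcoprime.mul_dvd h.1 h.2,
      fun h => ⟨(dvd_mul_right _ _).trans h, (dvd_mul_left _ _).trans h⟩⟩
  have hfin := finite_normFiber (p * m)
  rw [← ncard_normFiber_mul_sep_natCast_dvd hp.ne_zero m, ← hinter, ← hunion,
    Set.ncard_union_add_ncard_inter A B (hfin.subset (Set.sep_subset _ _))
      (hfin.subset (Set.sep_subset _ _)),
    ncard_normFiber_mul_sep_dvd hw hp.ne_zero, ncard_normFiber_mul_sep_dvd hw_star hp.ne_zero,
    two_mul]

end PrimeFactorisation

theorem heckeRecursion_ncard_normFiber :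
    HeckeRecursion (fun d => ZMod.χ₄ d) fun n => ((normFiber n).ncard : ℤ) := by
  intro p m hp
  rcases hp.eq_two_or_odd with rfl | hodd
  · have hχ : ZMod.χ₄ (2 : ℕ) = 0 := rfl
    simp only [hχ, ncard_normFiber_two_mul]
    ring
  rcases (by omega : p % 4 = 1 ∨ p % 4 = 3) with h1 | h3
  · have h := ncard_normFiber_prime_mul_of_mod_four_eq_one m hp h1
    rw [← Nat.cast_inj (R := ℤ)] at h
    push_cast at h
    simp only [ZMod.χ₄_nat_one_mod_four h1]
    linear_combination h
  · simp only [ZMod.χ₄_nat_three_mod_four h3,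
      ncard_normFiber_prime_mul_of_mod_four_eq_three m hp h3]
    push_cast
    ring

theorem ncard_normFiber_eq_sum_divisors {n : ℕ} (hn : n ≠ 0) :
    ((normFiber n).ncard : ℤ) = 4 * ∑ d ∈ n.divisors, ZMod.χ₄ d := by
  let χ : ℕ →* ℤ := (ZMod.χ₄ : ZMod 4 →* ℤ).comp (Nat.castRingHom (ZMod 4))
  have h := heckeRecursion_ncard_normFiber.eq_mul (heckeRecursion_sum_divisors χ) (by simp) hn
  rwa [ncard_normFiber_one] at h

theorem chiM4_eq_χ₄ (d : ℕ) : chiM4 d = ZMod.χ₄ d := by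
  rw [chiM4, ZMod.χ₄_nat_eq_if_mod_four]
  split_ifs <;> first | rfl | omega

theorem ncard_normFiber_sep_dvd_eq_Sdiv {w : GaussianInt} {k n : ℕ} (hw : w.norm = k)
    (hk : k ≠ 0) (hn : n ≠ 0) : ({z ∈ normFiber n | w ∣ z}.ncard : ℤ) = 4 * Sdiv chiM4 n k := by
  rw [ncard_normFiber_sep_dvd hw hk, Sdiv]
  split_ifs with h
  · simp only [chiM4_eq_χ₄]
    exact ncard_normFiber_eq_sum_divisors (Nat.div_ne_zero_iff_of_dvd h |>.2 ⟨hn, hk⟩)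
  · simp

theorem ncard_normFiber_eq_Sdiv {n : ℕ} (hn : n ≠ 0) :
    ((normFiber n).ncard : ℤ) = 4 * Sdiv chiM4 n 1 := by
  simpa using ncard_normFiber_sep_dvd_eq_Sdiv (w := 1) (k := 1) (by simp) one_ne_zero hn

theorem ncard_normFiber_sep_even_odd (n : ℕ) :
    {z ∈ normFiber n | Even z.re ∧ Odd z.im}.ncard =
      {z ∈ normFiber n | Odd z.re ∧ Even z.im}.ncard := by
  refine Set.ncard_congr (fun z _ => ⟨z.im, z.re⟩) ?_ ?_ ?_
  · rintro z ⟨hz, hre, him⟩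
    rw [mem_normFiber_iff_sq_add_sq, add_comm] at hz
    exact ⟨mem_normFiber_iff_sq_add_sq.2 hz, him, hre⟩
  · rintro z w _ _ h
    exact Zsqrtd.ext (congrArg Zsqrtd.im h) (congrArg Zsqrtd.re h)
  · rintro z ⟨hz, hre, him⟩
    rw [mem_normFiber_iff_sq_add_sq, add_comm] at hz
    exact ⟨⟨z.im, z.re⟩, ⟨mem_normFiber_iff_sq_add_sq.2 hz, him, hre⟩, rfl⟩

theorem ncard_normFiber_eq_add_two_mul_ncard_sep_odd_even (n : ℕ) :
    (normFiber n).ncard = {z ∈ normFiber n | (⟨1, 1⟩ : GaussianInt) ∣ z}.ncard +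
      2 * {z ∈ normFiber n | Odd z.re ∧ Even z.im}.ncard := by
  have hfin := finite_normFiber n
  have hparity : normFiber n \ {z | (⟨1, 1⟩ : GaussianInt) ∣ z} =
      {z ∈ normFiber n | Odd z.re ∧ Even z.im} ∪ {z ∈ normFiber n | Even z.re ∧ Odd z.im} := by
    rw [← Set.sep_or]
    ext z
    simp only [Set.mem_sdiff, Set.mem_ofPred_eq, one_add_I_dvd_iff, ← Int.not_even_iff_odd]
    grind
  have hdisj : Disjoint {z ∈ normFiber n | Odd z.re ∧ Even z.im}
      {z ∈ normFiber n | Even z.re ∧ Odd z.im} :=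
    Set.disjoint_left.2 fun z h h' => Int.not_even_iff_odd.2 h.2.1 h'.2.1
  rw [← Set.ncard_inter_add_ncard_sdiff_eq_ncard _ {z | (⟨1, 1⟩ : GaussianInt) ∣ z} hfin, hparity,
    Set.ncard_union_eq hdisj (hfin.subset (Set.sep_subset _ _)) (hfin.subset (Set.sep_subset _ _)),
    ncard_normFiber_sep_even_odd, two_mul]
  rfl

theorem ncard_sq_add_sq_odd_even (n : ℕ) :
    {p : ℤ × ℤ | p.1 ^ 2 + p.2 ^ 2 = (n : ℤ) ∧ p.1 % 2 = 1 ∧ p.2 % 2 = 0}.ncard =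
      {z ∈ normFiber n | Odd z.re ∧ Even z.im}.ncard := by
  refine Set.ncard_congr (fun p _ => ⟨p.1, p.2⟩) ?_ ?_ ?_
  · rintro p ⟨hp, hre, him⟩
    exact ⟨mem_normFiber_iff_sq_add_sq.2 hp, Int.odd_iff.2 hre, Int.even_iff.2 him⟩
  · rintro p q _ _ h
    exact Prod.ext (congrArg Zsqrtd.re h) (congrArg Zsqrtd.im h)
  · rintro z ⟨hz, hre, him⟩
    exact ⟨(z.re, z.im), ⟨mem_normFiber_iff_sq_add_sq.1 hz, Int.odd_iff.1 hre, Int.even_iff.1 him⟩,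
      rfl⟩

theorem rep_x2_y2_x1mod2_y0mod2 (n : ℕ) (hn : 0 < n) :
    ({p : ℤ × ℤ | p.1 ^ 2 + p.2 ^ 2 = (n : ℤ) ∧ p.1 % 2 = 1 ∧ p.2 % 2 = 0}.ncard : ℤ) =
      2 * Sdiv chiM4 n 1 - 2 * Sdiv chiM4 n 2 := by
  have htotal := ncard_normFiber_eq_Sdiv hn.ne'
  have hdvd := ncard_normFiber_sep_dvd_eq_Sdiv norm_one_add_I two_ne_zero hn.ne'
  have hsplit := ncard_normFiber_eq_add_two_mul_ncard_sep_odd_even n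
  rw [ncard_sq_add_sq_odd_even]
  zify at hsplit
  linarith
end
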